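/- arXiv:math/0607084 — 2 statements merged into one kernel-verified Lean document; each statement's English description precedes it below -/
import Mathlib

section
/- Let n ≥ 2 and let P ⊂ ℝⁿ be an n-dimensional integer convex polyhedron with 0 ∉ P. Let v be a vertex of P lying in the topological interior of conv(P ∪ {0}), suppose v is contained in exactly m edges of P, with primitive integer direction vectors r₁,…,r_m, and let F be an (n−1)-dimensional face of P with v ∈ F. Assume that ℤⁿ ∩ conv(P ∪ {0}) \ P = {0}, i.e., the only integer point of conv(P ∪ {0}) not belonging to P is the origin. Then the subgroup of ℤⁿ generated by ℤⁿ ∩ aff(F) has finite index ρ(F,0) in ℤⁿ, and ρ(F,0) < (nm)^{4·n!} · det oSt_v. -/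
open Set Function

noncomputable section

/-- Points of `ℝⁿ`. -/
abbrev Vec (n : ℕ) := Fin n → ℝ

/-- A point of `ℝⁿ` with all coordinates integer, i.e. a point of `ℤⁿ`. -/
def IsIntVec {n : ℕ} (x : Vec n) : Prop := ∀ i, ∃ m : ℤ, x i = (m : ℝ)

/-- The canonical embedding of `ℤⁿ` into `ℝⁿ`. -/
def intCast {n : ℕ} (y : Fin n → ℤ) : Vec n := fun i => (y i : ℝ)

/-- The standard inner product on `ℝⁿ`. -/
def dot {n : ℕ} (x y : Vec n) : ℝ := ∑ i, x i * y i

/-- An integer vector is primitive if the gcd of its coordinates is `1`, i.e. every common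
divisor of the coordinates is a unit. -/
def IsPrimitiveVec {n : ℕ} (r : Fin n → ℤ) : Prop :=
  ∀ d : ℤ, (∀ i, d ∣ r i) → IsUnit d

/-- `E` is a face of `K` of dimension `d`: a convex extreme subset of `K`
whose affine hull has dimension `d`. -/
def IsFaceDim {n : ℕ} (K E : Set (Vec n)) (d : ℕ) : Prop :=
  IsExtreme ℝ K E ∧ Convex ℝ E ∧ Module.finrank ℝ (affineSpan ℝ E).direction = d

/-- The vertex `v` of `P` is contained in exactly the `m` (pairwise distinct) edges
`E 0, …, E (m-1)` of `P`, and `r j` is the primitive integer direction vector of `E j`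
emanating from `v`. -/
def HasEdgeData {n m : ℕ} (P : Set (Vec n)) (v : Vec n)
    (E : Fin m → Set (Vec n)) (r : Fin m → (Fin n → ℤ)) : Prop :=
  Function.Injective E ∧
  (∀ j, IsFaceDim P (E j) 1 ∧ v ∈ E j ∧ IsPrimitiveVec (r j) ∧
    E j ⊆ {x | ∃ t : ℝ, 0 ≤ t ∧ x = v + t • intCast (r j)}) ∧
  (∀ F, IsFaceDim P F 1 → v ∈ F → ∃ j, F = E j)

open Classical in
/-- The determinant of the edge star of a vertex with primitive edge direction vectors
`r 0, …, r (m-1)`:  `∑_{1 ≤ i₁ < … < iₙ ≤ m} |det (r i₁, …, r iₙ)|`. -/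
def starDet {n m : ℕ} (r : Fin m → (Fin n → ℤ)) : ℤ :=
  ∑ g ∈ Finset.univ.filter (fun g : Fin n → Fin m => StrictMono g),
    |(Matrix.of fun i j => r (g i) j).det|

/-!
Let `r_{f 1}, …, r_{f (n-1)}` be edge directions at `v` that span the direction of `F`. The integer
functional `d y = det (y, r_{f 1}, …, r_{f (n-1)})` has `aff F` as its level set through `v`, so the
index in question divides `d v`, and it remains to prove `|d v| < B * det oSt_v` with `B` depending
only on `n`.

Since `v` is interior to `conv (P ∪ {0})` and `P - v` lies in the cone of the edge directions, `v`
itself lies in that cone. By the conic Carathéodory theorem `v = ∑ b_j (v + r_j)` for at most `n`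
lattice points `v + r_j` of `P`, with `b_j ≥ 0` and `∑ b_j < 1`. A repeated doubling argument
based on Dirichlet approximation replaces `b` by some `c ≥ 0` that is congruent to a multiple of `b`
modulo integer vectors and has `1 - ∑ c_j ≥ 1 / B`. Then `u = ∑ c_j (v + r_j)` is a nonzero lattice
point of `conv (P ∪ {0})`, hence `u ∈ P`. Normalise the sign of `d` so that `d ≥ d v > 0` on `P`;
since `d r_j ≤ det oSt_v`, the inequality `d v ≤ d u ≤ ∑ c_j (d v + det oSt_v)` bounds `d v` by
`B * det oSt_v`.
-/

section Diophantine

variable {ι : Type*}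

theorem exists_nat_forall_abs_mul_sub_int_le [Fintype ι] (α : ι → ℝ) (N : ι → ℕ)
    (hN : ∀ i, 0 < N i) :
    ∃ q : ℕ, 0 < q ∧ q ≤ ∏ i, N i ∧ ∀ i, ∃ z : ℤ, |q * α i - z| ≤ 1 / N i := by
  classical
  let box : ℕ → ι → ℤ := fun q i => ⌊N i * Int.fract (q * α i)⌋
  have box_mem : ∀ q ∈ Finset.range (∏ i, N i + 1),
      box q ∈ Fintype.piFinset fun i => Finset.Ico (0 : ℤ) (N i) := by
    intro q _
    rw [Fintype.mem_piFinset]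
    intro i
    have hNi : (0 : ℝ) < N i := mod_cast hN i
    rw [Finset.mem_Ico, Int.floor_nonneg, Int.floor_lt, Int.cast_natCast]
    exact ⟨mul_nonneg hNi.le (Int.fract_nonneg _),
      mul_lt_of_lt_one_right hNi (Int.fract_lt_one _)⟩
  obtain ⟨q, hq, q', hq', hne, hbox⟩ :=
    Finset.exists_ne_map_eq_of_card_lt_of_maps_to (by simp) box_mem
  wlog hlt : q < q' generalizing q q'
  · exact this q' hq' q hq hne.symm hbox.symm (by lia)
  refine ⟨q' - q, by lia, by grind, fun i => ⟨⌊q' * α i⌋ - ⌊q * α i⌋, ?_⟩⟩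
  have hNi : (0 : ℝ) < N i := mod_cast hN i
  have hdiff : ((q' - q : ℕ) : ℝ) * α i - ((⌊q' * α i⌋ - ⌊q * α i⌋ : ℤ) : ℝ) =
      Int.fract (q' * α i) - Int.fract (q * α i) := by
    rw [Nat.cast_sub hlt.le, Int.cast_sub, Int.fract, Int.fract]
    ring
  have hclose : |N i * Int.fract (q' * α i) - N i * Int.fract (q * α i)| < 1 :=
    Int.abs_sub_lt_one_of_floor_eq_floor (congrFun hbox i).symm
  rw [← mul_sub, abs_mul, abs_of_pos hNi] at hclose
  rw [hdiff, le_div_iff₀' hNi]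
  exact hclose.le

/-- `IsMultipleModInt b c` says that `c` is congruent to an integer multiple of `b` modulo
integer vectors. -/
def IsMultipleModInt (b c : ι → ℝ) : Prop :=
  ∃ (Q : ℤ) (z : ι → ℤ), ∀ i, c i = Q * b i - z i

theorem IsMultipleModInt.refl (b : ι → ℝ) : IsMultipleModInt b b :=
  ⟨1, 0, by simp⟩

theorem IsMultipleModInt.trans {b c d : ι → ℝ} (hbc : IsMultipleModInt b c)
    (hcd : IsMultipleModInt c d) : IsMultipleModInt b d := by
  obtain ⟨Q, z, hc⟩ := hbc
  obtain ⟨Q', z', hd⟩ := hcd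
  refine ⟨Q' * Q, fun i => Q' * z i + z' i, fun i => ?_⟩
  rw [hd, hc]
  push_cast
  ring

/-- A set `J` of indices dominates the weights `b` if the weight outside `J`, including the
defect `1 - ∑ i, b i`, is so small that simultaneous approximation of the weights in `J` does not
notice it. -/
def IsDominant (b : ι → ℝ) (J : Finset ι) : Prop :=
  (∀ i ∈ J, 0 < b i) ∧ (∏ i ∈ J, 3 / b i) * (1 - ∑ i ∈ J, b i) ≤ 1 / 2

theorem exists_nat_abs_mul_sub_int_le_half {b : ι → ℝ} {J : Finset ι}
    (hpos : ∀ i ∈ J, 0 < b i) (hle : ∀ i ∈ J, b i ≤ 1) :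
    ∃ (Q : ℕ) (z : ι → ℤ), 0 < Q ∧ Q ≤ ∏ i ∈ J, 3 / b i ∧
      (∀ i ∈ J, |Q * b i - z i| ≤ b i / 2) ∧ ∀ i ∉ J, z i = 0 := by
  classical
  have hceil : ∀ i : J, 0 < ⌈2 / b i⌉₊ := fun i => Nat.ceil_pos.mpr (div_pos two_pos (hpos i i.2))
  obtain ⟨Q, hQ, hQle, hQz⟩ :=
    exists_nat_forall_abs_mul_sub_int_le (fun i : J => b i) (fun i => ⌈2 / b i⌉₊) hceil
  choose z hz using hQz
  refine ⟨Q, fun i => if hi : i ∈ J then z ⟨i, hi⟩ else 0, hQ, ?_, fun i hi => ?_,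
    fun i hi => dif_neg hi⟩
  · calc (Q : ℝ) ≤ ∏ i : J, (⌈2 / b i⌉₊ : ℝ) := mod_cast hQle
      _ = ∏ i ∈ J, (⌈2 / b i⌉₊ : ℝ) := Finset.prod_coe_sort J fun i => (⌈2 / b i⌉₊ : ℝ)
      _ ≤ ∏ i ∈ J, 3 / b i := by
        refine Finset.prod_le_prod (fun i _ => Nat.cast_nonneg _) fun i hi => ?_
        have hceil_le := Nat.ceil_lt_add_one (div_pos two_pos (hpos i hi)).le
        have hone_le : 1 ≤ 1 / b i := (one_le_div (hpos i hi)).mpr (hle i hi)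
        linarith [show 3 / b i = 2 / b i + 1 / b i by ring]
  · simp only [dif_pos hi]
    calc |Q * b i - z ⟨i, hi⟩| ≤ 1 / ⌈2 / b i⌉₊ := hz ⟨i, hi⟩
      _ ≤ 1 / (2 / b i) :=
        one_div_le_one_div_of_le (div_pos two_pos (hpos i hi)) (Nat.le_ceil _)
      _ = b i / 2 := one_div_div _ _

theorem IsDominant.exists_sum_eq {b : ι → ℝ} {J : Finset ι} (hJ : IsDominant b J)
    (hlt : ∑ i ∈ J, b i < 1) :
    ∃ (Q : ℕ) (z : ι → ℤ), 0 < Q ∧ ∑ i ∈ J, z i = Q ∧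
      (∀ i ∈ J, |Q * b i - z i| ≤ b i / 2) ∧ ∀ i ∉ J, z i = 0 := by
  obtain ⟨hpos, hdom⟩ := hJ
  have hle : ∀ i ∈ J, b i ≤ 1 := fun i hi =>
    (Finset.single_le_sum (fun j hj => (hpos j hj).le) hi).trans hlt.le
  obtain ⟨Q, z, hQ, hQle, hzJ, hz⟩ := exists_nat_abs_mul_sub_int_le_half hpos hle
  refine ⟨Q, z, hQ, ?_, hzJ, hz⟩
  have hdev : |∑ i ∈ J, (Q * b i - z i)| ≤ (∑ i ∈ J, b i) / 2 := by
    rw [Finset.sum_div]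
    exact (Finset.abs_sum_le_sum_abs _ _).trans (Finset.sum_le_sum hzJ)
  rw [Finset.sum_sub_distrib, ← Finset.mul_sum, abs_le] at hdev
  have hdefect : Q * (1 - ∑ i ∈ J, b i) ≤ 1 / 2 :=
    (mul_le_mul_of_nonneg_right hQle (by linarith)).trans hdom
  have hdefect0 : 0 ≤ Q * (1 - ∑ i ∈ J, b i) := mul_nonneg Q.cast_nonneg (by linarith)
  have habs : |((∑ i ∈ J, z i - Q : ℤ) : ℝ)| < 1 := by
    push_cast
    rw [abs_lt]
    constructor <;> linarith
  exact sub_eq_zero.mp (Int.abs_lt_one_iff.mp (mod_cast habs))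

variable [Fintype ι]

theorem IsDominant.exists_two_mul_defect_le {b : ι → ℝ} {J : Finset ι} (hJ : IsDominant b J)
    (hb : ∀ i, 0 ≤ b i) (hpos : 0 < ∑ i, b i) (hlt : ∑ i, b i < 1) :
    ∃ c, IsMultipleModInt b c ∧ (∀ i, 0 ≤ c i) ∧ 0 < ∑ i, c i ∧
      2 * (1 - ∑ i, b i) ≤ 1 - ∑ i, c i := by
  obtain ⟨Q, z, hQ, hsum, hzJ, hz⟩ :=
    hJ.exists_sum_eq ((Finset.sum_le_univ_sum_of_nonneg hb).trans_lt hlt)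
  rw [Finset.sum_subset J.subset_univ fun i _ hi => hz i hi] at hsum
  have hQ1 : (1 : ℝ) ≤ Q := mod_cast hQ
  let c : ι → ℝ := fun i => ((Q + 1 : ℤ) : ℝ) * b i - z i
  have half_le : ∀ i, b i / 2 ≤ c i := by
    intro i
    simp only [c]
    push_cast
    by_cases hi : i ∈ J
    · linarith [neg_le_of_abs_le (hzJ i hi)]
    · rw [hz i hi, Int.cast_zero]
      nlinarith [hb i]
  have sum_c : ∑ i, c i = (Q + 1) * ∑ i, b i - Q := by
    have : ∑ i, (z i : ℝ) = Q := mod_cast hsum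
    simp only [c]
    rw [Finset.sum_sub_distrib, ← Finset.mul_sum, this]
    push_cast
    rfl
  refine ⟨c, ⟨Q + 1, z, fun _ => rfl⟩, fun i => (div_nonneg (hb i) two_pos.le).trans (half_le i),
    ?_, ?_⟩
  · calc 0 < ∑ i, b i / 2 := by rw [← Finset.sum_div]; exact half_pos hpos
      _ ≤ ∑ i, c i := Finset.sum_le_sum fun i _ => half_le i
  · rw [sum_c]
    nlinarith

/-- The bound on the reciprocal of the defect of a strictly subconvex combination of `n` points
that cannot be improved by passing to integer multiples of its weights. -/
def subconvexBound (n : ℕ) : ℕ := 2 * 3 ^ n * (4 * 3 ^ (n - 1)) ^ (2 ^ n - 1)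

theorem subconvexBound_mono : Monotone subconvexBound := fun m n hmn => by
  unfold subconvexBound
  have := Nat.one_le_two_pow (n := m)
  gcongr <;> grind

theorem two_mul_three_pow_mul_le {n j : ℕ} (hj : j < n) :
    2 * 3 ^ j * (n + 1 - j) ≤ 4 * 3 ^ (n - 1) := by
  obtain ⟨i, rfl⟩ := Nat.exists_eq_add_of_lt hj
  have hi : i + 2 ≤ 2 * 3 ^ i := by
    induction i with
    | zero => norm_num
    | succ i ih => rw [pow_succ]; have := ih (by lia); lia
  calc 2 * 3 ^ j * (j + i + 1 + 1 - j) = 2 * 3 ^ j * (i + 2) := by congr 1; lia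
    _ ≤ 2 * 3 ^ j * (2 * 3 ^ i) := by gcongr
    _ = 4 * 3 ^ (j + i + 1 - 1) := by rw [Nat.add_sub_cancel, pow_add]; ring

theorem exists_one_le_mul_pow_of_not_isDominant {b : ι → ℝ} {J : Finset ι} {A : ℝ} (hA : 0 < A)
    (hJA : 2 * 3 ^ J.card * (Fintype.card ι + 1 - J.card) ≤ A) (hJ : ∀ i ∈ J, 0 < b i)
    (hprod : ∏ i ∈ J, 1 / b i ≤ A ^ (2 ^ J.card - 1))
    (hdefect : (1 - ∑ i, b i) * A ^ 2 ^ J.card ≤ 1) (hdom : ¬ IsDominant b J) :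
    ∃ i ∉ J, 1 ≤ b i * A ^ 2 ^ J.card := by
  classical
  by_contra! hsmall
  have hcard : (J.card : ℝ) ≤ Fintype.card ι := mod_cast J.card_le_univ
  have tail_le : (1 - ∑ i ∈ J, b i) * A ^ 2 ^ J.card ≤ Fintype.card ι + 1 - J.card := by
    have hcompl : ∑ i ∈ Jᶜ, b i * A ^ 2 ^ J.card ≤ Jᶜ.card • (1 : ℝ) :=
      Finset.sum_le_card_nsmul _ _ _ fun i hi => (hsmall i (Finset.mem_compl.mp hi)).le
    rw [← Finset.sum_mul, nsmul_one, Finset.card_compl, Nat.cast_sub J.card_le_univ] at hcompl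
    rw [← Finset.sum_add_sum_compl J] at hdefect
    linarith
  have hpow : A ^ 2 ^ J.card = A ^ (2 ^ J.card - 1) * A := (pow_sub_one_mul (by simp) A).symm
  refine hdom ⟨hJ, ?_⟩
  calc (∏ i ∈ J, 3 / b i) * (1 - ∑ i ∈ J, b i)
      = 3 ^ J.card * (∏ i ∈ J, 1 / b i) * (1 - ∑ i ∈ J, b i) := by
        rw [← Finset.prod_const, ← Finset.prod_mul_distrib]
        simp only [mul_one_div]
    _ ≤ 3 ^ J.card * (∏ i ∈ J, 1 / b i) * ((Fintype.card ι + 1 - J.card) / A ^ 2 ^ J.card) := by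
        have : 0 ≤ ∏ i ∈ J, 1 / b i :=
          Finset.prod_nonneg fun i hi => one_div_nonneg.mpr (hJ i hi).le
        gcongr
        rwa [le_div_iff₀ (by positivity)]
    _ ≤ 3 ^ J.card * A ^ (2 ^ J.card - 1) *
          ((Fintype.card ι + 1 - J.card) / A ^ 2 ^ J.card) := by
        have : 0 ≤ ((Fintype.card ι : ℝ) + 1 - J.card) / A ^ 2 ^ J.card :=
          div_nonneg (by linarith) (by positivity)
        gcongr
    _ ≤ 1 / 2 := by
        rw [hpow]
        field_simp
        linarith

theorem exists_finset_card_eq_of_forall_not_isDominant {b : ι → ℝ} {A : ℝ} (hA : 1 ≤ A)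
    (hιA : ∀ j < Fintype.card ι, 2 * 3 ^ j * (Fintype.card ι + 1 - j) ≤ A)
    (hdefect : ∀ j < Fintype.card ι, (1 - ∑ i, b i) * A ^ 2 ^ j ≤ 1)
    (hdom : ∀ J, ¬ IsDominant b J) {j : ℕ} (hj : j ≤ Fintype.card ι) :
    ∃ J : Finset ι, J.card = j ∧ (∀ i ∈ J, 0 < b i) ∧ ∏ i ∈ J, 1 / b i ≤ A ^ (2 ^ j - 1) := by
  classical
  have hA0 : 0 < A := one_pos.trans_le hA
  induction j with
  | zero => exact ⟨∅, by simp⟩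
  | succ j ih =>
    obtain ⟨J, rfl, hJ, hprod⟩ := ih (by lia)
    obtain ⟨i, hi, hbi⟩ := exists_one_le_mul_pow_of_not_isDominant hA0 (hιA _ hj) hJ hprod
      (hdefect _ hj) (hdom J)
    have hbi0 : 0 < b i := pos_of_mul_pos_left (one_pos.trans_le hbi) (by positivity)
    refine ⟨insert i J, Finset.card_insert_of_notMem hi, Finset.forall_mem_insert _ _ _ |>.mpr
      ⟨hbi0, hJ⟩, ?_⟩
    rw [Finset.prod_insert hi]
    calc 1 / b i * ∏ i ∈ J, 1 / b i ≤ A ^ 2 ^ J.card * A ^ (2 ^ J.card - 1) := by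
          have hprod0 : 0 ≤ ∏ i ∈ J, 1 / b i :=
            Finset.prod_nonneg fun i hi => one_div_nonneg.mpr (hJ i hi).le
          exact mul_le_mul ((div_le_iff₀' hbi0).mpr hbi) hprod hprod0 (by positivity)
      _ = A ^ (2 ^ (J.card + 1) - 1) := by
          rw [← pow_add]
          congr 1
          have := Nat.one_le_two_pow (n := J.card)
          lia

theorem exists_isDominant {b : ι → ℝ} (hb : ∑ i, b i ≤ 1)
    (hdefect : (1 - ∑ i, b i) * subconvexBound (Fintype.card ι) < 1) :
    ∃ J, IsDominant b J := by
  set n := Fintype.card ι with hn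
  by_contra! hdom
  let A : ℝ := 4 * 3 ^ (n - 1)
  have hA : 1 ≤ A := by
    have : (1 : ℝ) ≤ 3 ^ (n - 1) := one_le_pow₀ (by norm_num)
    simp only [A]
    linarith
  have hbound : (subconvexBound n : ℝ) = 2 * 3 ^ n * A ^ (2 ^ n - 1) := by
    simp [subconvexBound, A]
  have hιA : ∀ j < n, 2 * 3 ^ j * ((n : ℝ) + 1 - j) ≤ A := by
    intro j hj
    have := two_mul_three_pow_mul_le hj
    rify [show j ≤ n + 1 by lia] at this
    exact this
  have hdefect_pow : ∀ j < n, (1 - ∑ i, b i) * A ^ 2 ^ j ≤ 1 := by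
    intro j hj
    have hexp : 2 ^ j ≤ 2 ^ n - 1 := Nat.le_sub_one_of_lt (Nat.pow_lt_pow_right (by norm_num) hj)
    have hpow : A ^ 2 ^ j ≤ subconvexBound n := by
      rw [hbound]
      have : (1 : ℝ) ≤ 3 ^ n := one_le_pow₀ (by norm_num)
      exact (pow_le_pow_right₀ hA hexp).trans (le_mul_of_one_le_left (by positivity) (by linarith))
    exact (mul_le_mul_of_nonneg_left hpow (by linarith)).trans hdefect.le
  obtain ⟨J, hJcard, hJ, hprod⟩ :=
    exists_finset_card_eq_of_forall_not_isDominant hA hιA hdefect_pow hdom le_rfl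
  obtain rfl := Finset.card_eq_iff_eq_univ J |>.mp hJcard
  refine hdom Finset.univ ⟨hJ, ?_⟩
  have hprod3 : ∏ i, 3 / b i = 3 ^ n * ∏ i, 1 / b i := by
    rw [hn, ← Finset.card_univ, ← Finset.prod_const, ← Finset.prod_mul_distrib]
    simp only [mul_one_div]
  calc (∏ i, 3 / b i) * (1 - ∑ i, b i) ≤ 3 ^ n * A ^ (2 ^ n - 1) * (1 - ∑ i, b i) := by
        rw [hprod3]
        gcongr
    _ ≤ 1 / 2 := by
        rw [hbound] at hdefect
        linarith

theorem exists_isMultipleModInt_one_le_defect_mul {b : ι → ℝ} (hb : ∀ i, 0 ≤ b i)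
    (hpos : 0 < ∑ i, b i) (hlt : ∑ i, b i < 1) :
    ∃ c, IsMultipleModInt b c ∧ (∀ i, 0 ≤ c i) ∧ 0 < ∑ i, c i ∧
      1 ≤ (1 - ∑ i, c i) * subconvexBound (Fintype.card ι) := by
  obtain ⟨t, ht⟩ := pow_unbounded_of_one_lt (1 / (1 - ∑ i, b i)) (one_lt_two (α := ℝ))
  rw [div_lt_iff₀ (by linarith)] at ht
  induction t generalizing b with
  | zero => linarith
  | succ t ih =>
    obtain hlarge | hsmall := le_or_gt 1 ((1 - ∑ i, b i) * subconvexBound (Fintype.card ι))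
    · exact ⟨b, .refl b, hb, hpos, hlarge⟩
    obtain ⟨J, hJ⟩ := exists_isDominant hlt.le hsmall
    obtain ⟨c, hbc, hc, hcpos, hdouble⟩ := hJ.exists_two_mul_defect_le hb hpos hlt
    obtain ⟨d, hcd, hd⟩ := ih hc hcpos (by linarith) (by rw [pow_succ] at ht; nlinarith)
    exact ⟨d, hbc.trans hcd, hd⟩

end Diophantine

section ExtremeSets

variable {V : Type*} [AddCommGroup V] [Module ℝ V] {A B S : Set V}

theorem mem_of_isExtreme_of_sum_smul_mem {ι : Type*} (hA : Convex ℝ A) (hB : IsExtreme ℝ A B)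
    {s : Finset ι} {w : ι → ℝ} {x : ι → V} (hw : ∀ i ∈ s, 0 < w i) (hw1 : ∑ i ∈ s, w i = 1)
    (hx : ∀ i ∈ s, x i ∈ A) (hsum : ∑ i ∈ s, w i • x i ∈ B) {i : ι} (hi : i ∈ s) : x i ∈ B := by
  classical
  rw [← Finset.add_sum_erase s _ hi] at hsum hw1
  obtain herase | ⟨j, hj⟩ := (s.erase i).eq_empty_or_nonempty
  · simp only [herase, Finset.sum_empty, add_zero] at hsum hw1
    rwa [hw1, one_smul] at hsum
  have hwe : ∀ k ∈ s.erase i, 0 < w k := fun k hk => hw k (Finset.mem_of_mem_erase hk)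
  have hpos : 0 < ∑ k ∈ s.erase i, w k := Finset.sum_pos hwe ⟨j, hj⟩
  have hy : (s.erase i).centerMass w x ∈ A :=
    hA.centerMass_mem (fun k hk => (hwe k hk).le) hpos fun k hk => hx k (Finset.mem_of_mem_erase hk)
  refine hB.left_mem_of_mem_openSegment (hx i hi) hy hsum ⟨w i, _, hw i hi, hpos, hw1, ?_⟩
  rw [Finset.centerMass, smul_inv_smul₀ hpos.ne']

theorem subset_convexHull_inter_of_isExtreme (hB : IsExtreme ℝ (convexHull ℝ S) B) :
    B ⊆ convexHull ℝ (S ∩ B) := by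
  intro x hx
  obtain ⟨ι, _, z, w, hz, -, hw, hw1, rfl⟩ :=
    eq_pos_convex_span_of_mem_convexHull (hB.subset hx)
  have hzB : ∀ i, z i ∈ B := fun i =>
    mem_of_isExtreme_of_sum_smul_mem (convex_convexHull ℝ S) hB (fun i _ => hw i) hw1
      (fun i _ => subset_convexHull ℝ S (hz ⟨i, rfl⟩)) hx (Finset.mem_univ i)
  exact (convex_convexHull ℝ _).sum_mem (fun i _ => (hw i).le) hw1
    fun i _ => subset_convexHull ℝ _ ⟨hz ⟨i, rfl⟩, hzB i⟩

end ExtremeSets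

section Facets

variable {V : Type*} [NormedAddCommGroup V] [NormedSpace ℝ V] [FiniteDimensional ℝ V] {P F : Set V}

theorem mem_of_isExtreme_of_mem_affineSpan (hF : IsExtreme ℝ P F) (hFconv : Convex ℝ F)
    (hFne : F.Nonempty) {z : V} (hzP : z ∈ P) (hzF : z ∈ affineSpan ℝ F) : z ∈ F := by
  obtain ⟨_, p, hp, rfl⟩ := hFne.intrinsicInterior hFconv
  let ray : ℝ → affineSpan ℝ F := fun t =>
    ⟨AffineMap.lineMap z p t, AffineMap.lineMap_mem t hzF p.2⟩
  have ray_continuous : Continuous ray :=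
    Continuous.subtype_mk AffineMap.lineMap_continuous _
  have ray_one : ray 1 = p := Subtype.ext (AffineMap.lineMap_apply_one z (p : V))
  have ray_mem : ∀ᶠ t in nhds (1 : ℝ), ray t ∈ interior ((↑) ⁻¹' F : Set (affineSpan ℝ F)) :=
    ray_continuous.continuousAt.eventually_mem (isOpen_interior.mem_nhds (ray_one ▸ hp))
  obtain ⟨t, hray, ht⟩ := ((ray_mem.filter_mono nhdsWithin_le_nhds).and
    (self_mem_nhdsWithin (s := Set.Ioi (1 : ℝ)))).exists
  have hmem : (p : V) ∈ openSegment ℝ z (ray t) := by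
    have := AffineMap.lineMap_lineMap_right z (p : V) t t⁻¹
    rw [inv_mul_cancel₀ (one_pos.trans ht).ne', AffineMap.lineMap_apply_one] at this
    rw [← this]
    exact lineMap_mem_openSegment _ _ _ ⟨inv_pos.mpr (one_pos.trans ht), inv_lt_one_of_one_lt₀ ht⟩
  have hray_mem : (ray t : V) ∈ F := Set.mem_preimage.mp (interior_subset hray)
  have hpF : (p : V) ∈ F := Set.mem_preimage.mp (interior_subset hp)
  exact hF.left_mem_of_mem_openSegment hzP (hF.subset hray_mem) hpF hmem

theorem forall_le_or_forall_le_of_isExtreme (hP : Convex ℝ P) (hF : IsExtreme ℝ P F)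
    (hFconv : Convex ℝ F) {v : V} (hvF : v ∈ F) {L : V →ₗ[ℝ] ℝ}
    (hL : (affineSpan ℝ F).direction = LinearMap.ker L) :
    (∀ x ∈ P, L v ≤ L x) ∨ (∀ x ∈ P, L x ≤ L v) := by
  have mem_span_iff : ∀ z, z ∈ affineSpan ℝ F ↔ L z = L v := fun z => by
    rw [← AffineSubspace.vsub_right_mem_direction_iff_mem (mem_affineSpan ℝ hvF), hL,
      LinearMap.mem_ker, vsub_eq_sub, map_sub, sub_eq_zero]
  by_contra! ⟨⟨y, hy, hyL⟩, ⟨x, hx, hxL⟩⟩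
  obtain ⟨z, hz, hzL⟩ : ∃ z ∈ openSegment ℝ y x, L z = L v := by
    have : L v ∈ L.toAffineMap '' openSegment ℝ y x := by
      rw [image_openSegment, LinearMap.coe_toAffineMap, openSegment_eq_Ioo (hyL.trans hxL)]
      exact ⟨hyL, hxL⟩
    exact this
  have hzF : z ∈ F := mem_of_isExtreme_of_mem_affineSpan hF hFconv ⟨v, hvF⟩
    (hP.openSegment_subset hy hx hz) ((mem_span_iff z).mpr hzL)
  have hyF : y ∈ F := hF.left_mem_of_mem_openSegment hy hx hzF hz
  exact hyL.ne ((mem_span_iff y).mp (subset_affineSpan ℝ F hyF))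

end Facets

section Cones

variable {𝕜 V : Type*} [Field 𝕜] [LinearOrder 𝕜] [IsStrictOrderedRing 𝕜] [AddCommGroup V]
  [Module 𝕜 V]

theorem mem_hull_finset_iff {t : Finset V} {x : V} :
    x ∈ PointedCone.hull 𝕜 (t : Set V) ↔
      ∃ f : V → 𝕜, (∀ e ∈ t, 0 ≤ f e) ∧ ∑ e ∈ t, f e • e = x := by
  refine ⟨fun hx => ?_, ?_⟩
  · obtain ⟨f, -, rfl⟩ := Submodule.mem_span_finset.mp hx
    exact ⟨fun e => f e, fun e _ => (f e).2, rfl⟩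
  · rintro ⟨f, hf, rfl⟩
    exact Submodule.sum_mem _ fun e he =>
      PointedCone.smul_mem _ (hf e he) (PointedCone.subset_hull he)

theorem exists_mem_hull_erase_of_not_linearIndepOn [DecidableEq V] {t : Finset V}
    (ht : ¬ LinearIndepOn 𝕜 id (t : Set V)) {x : V} (hx : x ∈ PointedCone.hull 𝕜 (t : Set V)) :
    ∃ y ∈ t, x ∈ PointedCone.hull 𝕜 (t.erase y : Set V) := by
  obtain ⟨f, hf, rfl⟩ := mem_hull_finset_iff.mp hx
  obtain ⟨g, hg, e₀, he₀, hge₀⟩ : ∃ g : V → 𝕜, ∑ e ∈ t, g e • e = 0 ∧ ∃ e ∈ t, 0 < g e := by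
    rw [linearIndepOn_finset_iff] at ht
    push Not at ht
    obtain ⟨g, hg, e, he, hne⟩ := ht
    obtain hneg | hpos := hne.lt_or_gt
    · exact ⟨-g, by simpa using hg, e, he, neg_pos.mpr hneg⟩
    · exact ⟨g, hg, e, he, hpos⟩
  obtain ⟨y, hy, hmin⟩ := Finset.exists_min_image {e ∈ t | 0 < g e} (fun e => f e / g e)
    ⟨e₀, Finset.mem_filter.mpr ⟨he₀, hge₀⟩⟩
  obtain ⟨hyt, hgy⟩ := Finset.mem_filter.mp hy
  let k : V → 𝕜 := fun e => f e - f y / g y * g e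
  have k_y : k y = 0 := by simp [k, hgy.ne']
  have k_nonneg : ∀ e ∈ t, 0 ≤ k e := by
    intro e he
    obtain hge | hge := le_or_gt (g e) 0
    · exact sub_nonneg.mpr ((mul_nonpos_of_nonneg_of_nonpos
        (div_nonneg (hf y hyt) hgy.le) hge).trans (hf e he))
    · exact sub_nonneg.mpr ((le_div_iff₀ hge).mp (hmin e (Finset.mem_filter.mpr ⟨he, hge⟩)))
  refine ⟨y, hyt, mem_hull_finset_iff.mpr ⟨k, fun e he => k_nonneg e (Finset.mem_of_mem_erase he),
    ?_⟩⟩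
  calc ∑ e ∈ t.erase y, k e • e = ∑ e ∈ t, k e • e :=
        Finset.sum_erase _ (by rw [k_y, zero_smul])
    _ = ∑ e ∈ t, f e • e - (f y / g y) • ∑ e ∈ t, g e • e := by
        simp only [k, sub_smul, mul_smul, Finset.sum_sub_distrib, Finset.smul_sum]
    _ = ∑ e ∈ t, f e • e := by rw [hg, smul_zero, sub_zero]

theorem exists_linearIndepOn_mem_hull {s : Set V} {x : V} (hx : x ∈ PointedCone.hull 𝕜 s) :
    ∃ t : Finset V, ↑t ⊆ s ∧ LinearIndepOn 𝕜 id (t : Set V) ∧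
      x ∈ PointedCone.hull 𝕜 (t : Set V) := by
  classical
  have hex : ∃ t : Finset V, ↑t ⊆ s ∧ x ∈ PointedCone.hull 𝕜 (t : Set V) :=
    Submodule.mem_span_finite_of_mem_span hx
  obtain ⟨t, ⟨hts, hxt⟩, hmin⟩ := exists_minimal_of_wellFoundedLT _ hex
  refine ⟨t, hts, not_not.mp fun ht => ?_, hxt⟩
  obtain ⟨y, hy, hxy⟩ := exists_mem_hull_erase_of_not_linearIndepOn ht hxt
  have hle := hmin ⟨(Finset.coe_subset.mpr (t.erase_subset y)).trans hts, hxy⟩ (t.erase_subset y)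
  exact Finset.notMem_erase y t (hle hy)

theorem eq_zero_or_pos_of_mem_hull {T : Set V} {f : V →ₗ[𝕜] 𝕜} (hf : ∀ a ∈ T, 0 < f a) {x : V}
    (hx : x ∈ PointedCone.hull 𝕜 T) : x = 0 ∨ 0 < f x := by
  induction hx using Submodule.span_induction with
  | mem x hx => exact .inr (hf x hx)
  | zero => exact .inl rfl
  | add x y _ _ hx hy =>
    obtain rfl | hx := hx
    · simpa using hy
    · obtain rfl | hy := hy
      · exact .inr (by simpa using hx)
      · exact .inr (by simpa using add_pos hx hy)
  | smul c x _ hx =>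
    obtain rfl | hx := hx
    · exact .inl (smul_zero c)
    · obtain rfl | hc := eq_zero_or_pos c
      · exact .inl (zero_smul _ x)
      · exact .inr ((f.map_smul (c : 𝕜) x).symm ▸ mul_pos hc hx)

theorem exists_minimal_hull_eq {T : Set V} (hT : T.Finite) :
    ∃ T' ⊆ T, PointedCone.hull 𝕜 T' = PointedCone.hull 𝕜 T ∧
      ∀ a ∈ T', a ∉ PointedCone.hull 𝕜 (T' \ {a}) := by
  obtain ⟨T', hT'T, ⟨-, hhull⟩, hmin⟩ := (hT.finite_subsets.subset fun A (hA : A ⊆ T ∧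
    PointedCone.hull 𝕜 A = PointedCone.hull 𝕜 T) => hA.1).exists_le_minimal ⟨subset_rfl, rfl⟩
  refine ⟨T', hT'T, hhull, fun a ha hmem => ?_⟩
  have hdiff : PointedCone.hull 𝕜 (T' \ {a}) = PointedCone.hull 𝕜 T := by
    rw [← hhull, PointedCone.hull, ← Submodule.span_insert_eq_span hmem,
      Set.insert_sdiff_self_of_mem ha]
  exact (hmin ⟨Set.sdiff_subset.trans hT'T, hdiff⟩ Set.sdiff_subset ha).2 rfl

theorem mem_hull_insert_iff {T : Set V} {a x : V} :
    x ∈ PointedCone.hull 𝕜 (insert a T) ↔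
      ∃ α : 𝕜, 0 ≤ α ∧ ∃ z ∈ PointedCone.hull 𝕜 T, x = α • a + z := by
  rw [PointedCone.hull, Submodule.mem_span_insert]
  exact ⟨fun ⟨α, z, hz, hx⟩ => ⟨α, α.2, z, hz, hx⟩, fun ⟨α, hα, z, hz, hx⟩ => ⟨⟨α, hα⟩, z, hz, hx⟩⟩

theorem exists_eq_smul_of_add_eq_smul_of_mem_hull {T : Set V} {f : V →ₗ[𝕜] 𝕜}
    (hf : ∀ a ∈ T, 0 < f a) {a : V} (ha : a ∈ T) (hmin : a ∉ PointedCone.hull 𝕜 (T \ {a}))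
    {x y : V} (hx : x ∈ PointedCone.hull 𝕜 T) (hy : y ∈ PointedCone.hull 𝕜 T) {t : 𝕜}
    (hxy : x + y = t • a) : ∃ s : 𝕜, 0 ≤ s ∧ x = s • a := by
  rw [← Set.insert_sdiff_self_of_mem ha, mem_hull_insert_iff] at hx hy
  obtain ⟨α, hα, x', hx', rfl⟩ := hx
  obtain ⟨β, -, y', hy', rfl⟩ := hy
  have hf' : ∀ b ∈ T \ {a}, 0 < f b := fun b hb => hf b hb.1
  have hxy' : x' + y' = (t - α - β) • a := by
    rw [sub_smul, sub_smul, ← hxy]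
    abel
  have hle : t - α - β ≤ 0 := by
    by_contra! hpos
    have hmem := PointedCone.smul_mem _ (inv_nonneg.mpr hpos.le) (add_mem hx' hy')
    rw [hxy', inv_smul_smul₀ hpos.ne'] at hmem
    exact hmin hmem
  have hfle : f x' + f y' ≤ 0 := by
    rw [← map_add, hxy', map_smul]
    exact mul_nonpos_of_nonpos_of_nonneg hle (hf a ha).le
  have hfy' : 0 ≤ f y' := by
    obtain rfl | h := eq_zero_or_pos_of_mem_hull hf' hy'
    · exact (map_zero f).ge
    · exact h.le
  have hx'0 : x' = 0 :=
    (eq_zero_or_pos_of_mem_hull hf' hx').resolve_right fun h => by linarith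
  exact ⟨α, hα, by rw [hx'0, add_zero]⟩

end Cones

section VertexCones

variable {V : Type*} [AddCommGroup V] [Module ℝ V] {S : Set V} {v : V}

theorem sub_mem_hull_of_mem_convexHull {x : V} (hx : x ∈ convexHull ℝ S) :
    x - v ∈ PointedCone.hull ℝ ((· - v) '' (S \ {v})) := by
  have hconvex : Convex ℝ {x | x - v ∈ PointedCone.hull ℝ ((· - v) '' (S \ {v}))} := by
    simp only [sub_eq_add_neg]
    exact (PointedCone.convex _).translate_preimage_left (-v)
  refine convexHull_min (fun s hs => ?_) hconvex hx
  by_cases hsv : s = v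
  · simp [hsv]
  · exact PointedCone.subset_hull ⟨s, ⟨hs, hsv⟩, rfl⟩

variable [TopologicalSpace V] [IsTopologicalAddGroup V] [ContinuousSMul ℝ V]
  [LocallyConvexSpace ℝ V] [T2Space V]

theorem exists_forall_lt_of_mem_extremePoints (hS : S.Finite)
    (hv : v ∈ (convexHull ℝ S).extremePoints ℝ) : ∃ f : V →ₗ[ℝ] ℝ, ∀ s ∈ S \ {v}, f v < f s := by
  have hv' : v ∉ convexHull ℝ (S \ {v}) := fun h =>
    ((convex_convexHull ℝ S).mem_extremePoints_iff_mem_sdiff_convexHull_sdiff.mp hv).2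
      (convexHull_mono (Set.sdiff_subset_sdiff_left (subset_convexHull ℝ S)) h)
  obtain ⟨f, u, hfv, hf⟩ := geometric_hahn_banach_point_closed (convex_convexHull ℝ _)
    ((hS.sdiff (t := {v})).isClosed_convexHull ℝ) hv'
  exact ⟨f, fun s hs => hfv.trans (hf s (subset_convexHull ℝ _ hs))⟩

theorem exists_extreme_rays_of_mem_extremePoints (hS : S.Finite)
    (hv : v ∈ (convexHull ℝ S).extremePoints ℝ) :
    ∃ T : Set V, (∀ a ∈ T, a ≠ 0 ∧ v + a ∈ S ∧
        IsExtreme ℝ (convexHull ℝ S) (convexHull ℝ S ∩ {x | ∃ t : ℝ, 0 ≤ t ∧ x = v + t • a})) ∧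
      ∀ x ∈ convexHull ℝ S, x - v ∈ PointedCone.hull ℝ T := by
  obtain ⟨f, hf⟩ := exists_forall_lt_of_mem_extremePoints hS hv
  obtain ⟨T, hT, hhull, hmin⟩ :=
    exists_minimal_hull_eq (𝕜 := ℝ) ((hS.sdiff (t := {v})).image (· - v))
  have hcone : ∀ x ∈ convexHull ℝ S, x - v ∈ PointedCone.hull ℝ T := fun x hx =>
    hhull ▸ sub_mem_hull_of_mem_convexHull hx
  have hfT : ∀ a ∈ T, 0 < f a := by
    intro a ha
    obtain ⟨s, hs, rfl⟩ := hT ha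
    rw [map_sub, sub_pos]
    exact hf s hs
  refine ⟨T, fun a ha => ⟨fun h0 => ?_, ?_, Set.inter_subset_left, ?_⟩, hcone⟩
  · exact (hfT a ha).ne' (by rw [h0, map_zero])
  · obtain ⟨s, hs, rfl⟩ := hT ha
    rw [add_sub_cancel]
    exact hs.1
  · rintro x hx y hy z ⟨-, t, -, rfl⟩ ⟨α, β, hα, hβ, hαβ, hz⟩
    have hsum : α • (x - v) + β • (y - v) = t • a := by
      rw [smul_sub, smul_sub, sub_add_sub_comm, hz, ← add_smul, hαβ, one_smul,
        add_sub_cancel_left]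
    obtain ⟨s, hs, hxs⟩ := exists_eq_smul_of_add_eq_smul_of_mem_hull hfT ha (hmin a ha)
      (PointedCone.smul_mem _ hα.le (hcone x hx)) (PointedCone.smul_mem _ hβ.le (hcone y hy)) hsum
    refine ⟨hx, α⁻¹ * s, by positivity, ?_⟩
    rw [mul_smul, ← hxs, inv_smul_smul₀ hα.ne', add_sub_cancel]

end VertexCones

section Edges

variable {n : ℕ}

theorem isFaceDim_one_inter_ray {P : Set (Vec n)} (hP : Convex ℝ P) {v a : Vec n} (ha : a ≠ 0)
    (hv : v ∈ P) (hva : v + a ∈ P)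
    (hext : IsExtreme ℝ P (P ∩ {x | ∃ t : ℝ, 0 ≤ t ∧ x = v + t • a})) :
    IsFaceDim P (P ∩ {x | ∃ t : ℝ, 0 ≤ t ∧ x = v + t • a}) 1 := by
  set E := P ∩ {x | ∃ t : ℝ, 0 ≤ t ∧ x = v + t • a}
  have hvE : v ∈ E := ⟨hv, 0, le_rfl, by simp⟩
  have hvaE : v + a ∈ E := ⟨hva, 1, zero_le_one, by simp⟩
  refine ⟨hext, hP.inter ?_, ?_⟩
  · rintro _ ⟨s, hs, rfl⟩ _ ⟨t, ht, rfl⟩ α β hα hβ hαβ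
    refine ⟨α * s + β * t, by positivity, ?_⟩
    rw [smul_add, smul_add, add_add_add_comm, ← add_smul, hαβ, one_smul, smul_smul, smul_smul,
      ← add_smul]
  · have hdir : vectorSpan ℝ E = ℝ ∙ a := by
      refine le_antisymm ?_ ?_
      · rw [vectorSpan_eq_span_vsub_set_right ℝ hvE, Submodule.span_le]
        rintro _ ⟨_, ⟨-, t, -, rfl⟩, rfl⟩
        simpa using Submodule.smul_mem _ t (Submodule.mem_span_singleton_self a)
      · rw [Submodule.span_singleton_le_iff_mem]
        simpa using vsub_mem_vectorSpan ℝ hvaE hvE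
    rw [direction_affineSpan, hdir, finrank_span_singleton ha]

theorem HasEdgeData.sub_mem_hull {m : ℕ} {S : Set (Vec n)} (hS : S.Finite) {v : Vec n}
    (hv : v ∈ (convexHull ℝ S).extremePoints ℝ) {E : Fin m → Set (Vec n)}
    {r : Fin m → Fin n → ℤ} (hE : HasEdgeData (convexHull ℝ S) v E r) {x : Vec n}
    (hx : x ∈ convexHull ℝ S) :
    x - v ∈ PointedCone.hull ℝ (Set.range fun j => intCast (r j)) := by
  obtain ⟨T, hT, hcone⟩ := exists_extreme_rays_of_mem_extremePoints hS hv
  refine Submodule.span_le.mpr (fun a ha => ?_) (hcone x hx)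
  obtain ⟨ha0, hva, hext⟩ := hT a ha
  have hvaP := subset_convexHull ℝ S hva
  obtain ⟨j, hj⟩ := hE.2.2 _
    (isFaceDim_one_inter_ray (convex_convexHull ℝ S) ha0 hv.1 hvaP hext)
    ⟨hv.1, 0, le_rfl, by simp⟩
  have hvaE : v + a ∈ E j := hj ▸ ⟨hvaP, 1, zero_le_one, by simp⟩
  obtain ⟨t, ht, hat⟩ := (hE.2.1 j).2.2.2 hvaE
  rw [add_left_cancel hat]
  exact PointedCone.smul_mem _ ht (PointedCone.subset_hull ⟨j, rfl⟩)

theorem IsFaceDim.exists_mem_ne {S E : Set (Vec n)} {v : Vec n}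
    (hE : IsFaceDim (convexHull ℝ S) E 1) : ∃ s ∈ S ∩ E, s ≠ v := by
  by_contra! hv
  have hEv : E ⊆ {v} := calc
    E ⊆ convexHull ℝ (S ∩ E) := subset_convexHull_inter_of_isExtreme hE.1
    _ ⊆ convexHull ℝ {v} := convexHull_mono hv
    _ = {v} := convexHull_singleton v
  have hdim := hE.2.2
  rw [direction_affineSpan, vectorSpan_of_subsingleton ℝ (Set.subsingleton_singleton.anti hEv),
    finrank_bot] at hdim
  exact zero_ne_one hdim

/-- The lattice `ℤⁿ` inside `ℝⁿ`. -/
def intLattice (n : ℕ) : AddSubgroup (Vec n) where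
  carrier := {x | IsIntVec x}
  zero_mem' := fun _ => ⟨0, by simp⟩
  add_mem' := fun hx hy i => by
    obtain ⟨a, ha⟩ := hx i
    obtain ⟨b, hb⟩ := hy i
    exact ⟨a + b, by simp [ha, hb]⟩
  neg_mem' := fun hx i => by
    obtain ⟨a, ha⟩ := hx i
    exact ⟨-a, by simp [ha]⟩

theorem mem_intLattice {x : Vec n} : x ∈ intLattice n ↔ IsIntVec x := Iff.rfl

theorem intCast_mem_intLattice (y : Fin n → ℤ) : intCast y ∈ intLattice n := fun i => ⟨y i, rfl⟩

theorem IsPrimitiveVec.exists_sum_mul_eq_one {r : Fin n → ℤ} (hr : IsPrimitiveVec r) :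
    ∃ a : Fin n → ℤ, ∑ i, a i * r i = 1 := by
  obtain ⟨d, hd⟩ := IsPrincipalIdealRing.principal (Ideal.span (Set.range r))
  have hunit : IsUnit d := hr d fun i =>
    Ideal.mem_span_singleton.mp (hd.le (Ideal.subset_span (Set.mem_range_self i)))
  have hone : (1 : ℤ) ∈ Ideal.span (Set.range r) :=
    hd ▸ Ideal.mem_span_singleton.mpr hunit.dvd
  exact Ideal.mem_span_range_iff_exists_fun.mp hone

theorem IsPrimitiveVec.exists_eq_intCast_of_smul_mem {r : Fin n → ℤ} (hr : IsPrimitiveVec r)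
    {t : ℝ} (ht : t • intCast r ∈ intLattice n) : ∃ k : ℤ, t = k := by
  obtain ⟨a, ha⟩ := hr.exists_sum_mul_eq_one
  choose z hz using ht
  refine ⟨∑ i, a i * z i, ?_⟩
  calc t = t * ((∑ i, a i * r i : ℤ) : ℝ) := by rw [ha, Int.cast_one, mul_one]
    _ = ∑ i, (a i : ℝ) * (t • intCast r) i := by
      push_cast
      rw [Finset.mul_sum]
      exact Finset.sum_congr rfl fun i _ => mul_left_comm _ _ _
    _ = ((∑ i, a i * z i : ℤ) : ℝ) := by
      push_cast
      simp only [hz]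

theorem HasEdgeData.add_intCast_mem {m : ℕ} {S : Set (Vec n)} (hS : S ⊆ intLattice n)
    {v : Vec n} (hv : v ∈ intLattice n) {E : Fin m → Set (Vec n)} {r : Fin m → Fin n → ℤ}
    (hE : HasEdgeData (convexHull ℝ S) v E r) (j : Fin m) :
    v + intCast (r j) ∈ convexHull ℝ S := by
  obtain ⟨hface, hvE, hr, hray⟩ := hE.2.1 j
  obtain ⟨s, ⟨hsS, hsE⟩, hsv⟩ := hface.exists_mem_ne (v := v)
  obtain ⟨t, ht, rfl⟩ := hray hsE
  obtain ⟨k, rfl⟩ := hr.exists_eq_intCast_of_smul_mem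
    ((add_mem_cancel_left hv).mp (hS hsS))
  have hk : (k : ℝ) ≠ 0 := fun h => hsv (by rw [h, zero_smul, add_zero])
  have hk1 : (1 : ℝ) ≤ k := mod_cast ht.lt_of_ne' hk
  have := (convex_convexHull ℝ S).add_smul_mem (hface.1.subset hvE)
    (subset_convexHull ℝ S hsS) ⟨inv_nonneg.mpr ht, inv_le_one_of_one_le₀ hk1⟩
  rwa [inv_smul_smul₀ hk] at this

end Edges

section Interior

variable {V : Type*} [AddCommGroup V] [Module ℝ V] [TopologicalSpace V] [ContinuousAdd V]
  [ContinuousSMul ℝ V] {P : Set V} {v : V}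

theorem exists_pos_add_smul_mem_of_mem_interior {s : Set V} (hv : v ∈ interior s) (y : V) :
    ∃ δ : ℝ, 0 < δ ∧ v + δ • y ∈ s := by
  have hcont : Continuous fun δ : ℝ => v + δ • y := by fun_prop
  have hnear : ∀ᶠ δ : ℝ in nhds 0, v + δ • y ∈ s :=
    hcont.continuousAt.eventually_mem (mem_interior_iff_mem_nhds.mp (by simpa using hv))
  obtain ⟨δ, hδ, hpos⟩ := ((hnear.filter_mono nhdsWithin_le_nhds).and
    (self_mem_nhdsWithin (s := Set.Ioi (0 : ℝ)))).exists
  exact ⟨δ, hpos, hδ⟩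

theorem mem_cone_of_mem_interior_convexHull {C : PointedCone ℝ V} (hC : ∀ x ∈ P, x - v ∈ C)
    (hv : v ∈ interior (convexHull ℝ (P ∪ {0}))) : v ∈ C := by
  obtain ⟨δ, hδ, hmem⟩ := exists_pos_add_smul_mem_of_mem_interior hv v
  have hconvex : Convex ℝ {x | ∃ s : ℝ, s ≤ 1 ∧ x - s • v ∈ C} := by
    rintro x ⟨s, hs, hx⟩ y ⟨t, ht, hy⟩ α β hα hβ hαβ
    refine ⟨α * s + β * t, by nlinarith, ?_⟩
    convert add_mem (C.smul_mem hα hx) (C.smul_mem hβ hy) using 1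
    module
  have hsub : P ∪ {0} ⊆ {x | ∃ s : ℝ, s ≤ 1 ∧ x - s • v ∈ C} := by
    rintro x (hx | rfl)
    · exact ⟨1, le_rfl, by simpa using hC x hx⟩
    · exact ⟨0, zero_le_one, by simp⟩
  obtain ⟨s, hs, hsv⟩ := convexHull_min hsub hconvex hmem
  have hpos : 0 < 1 + δ - s := by linarith
  have : v = (1 + δ - s)⁻¹ • (v + δ • v - s • v) := by
    rw [eq_inv_smul_iff₀ hpos.ne', sub_smul, add_smul, one_smul]
  rw [this]
  exact C.smul_mem (inv_nonneg.mpr hpos.le) hsv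

theorem pos_of_mem_interior_convexHull {L : V →ₗ[ℝ] ℝ} (hL : L ≠ 0) (hLP : ∀ x ∈ P, L v ≤ L x)
    (hv : v ∈ interior (convexHull ℝ (P ∪ {0}))) : 0 < L v := by
  by_contra! hle
  obtain ⟨y, hy⟩ : ∃ y, L y < 0 := by
    obtain ⟨y, hy⟩ := DFunLike.ne_iff.mp hL
    obtain hneg | hpos := lt_or_gt_of_ne hy
    · exact ⟨y, hneg⟩
    · exact ⟨-y, by rw [map_neg, neg_lt_zero]; exact hpos⟩
  obtain ⟨δ, hδ, hmem⟩ := exists_pos_add_smul_mem_of_mem_interior hv y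
  have hsub : P ∪ {0} ⊆ {x | L v ≤ L x} := by
    rintro x (hx | rfl)
    · exact hLP x hx
    · simpa using hle
  have hge : L v ≤ L (v + δ • y) :=
    convexHull_min hsub (convex_halfSpace_ge L.isLinear _) hmem
  rw [map_add, map_smul, smul_eq_mul] at hge
  nlinarith

end Interior

section FaceDirections

variable {V : Type*} [AddCommGroup V] [Module ℝ V] {P F T : Set V} {v : V}

theorem add_mem_of_isExtreme_of_sum_smul_mem (hP : Convex ℝ P) (hF : IsExtreme ℝ P F)
    (hFconv : Convex ℝ F) (hv : v ∈ F) {t : Finset V} (ht : ∀ e ∈ t, v + e ∈ P) {f : V → ℝ}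
    (hf : ∀ e ∈ t, 0 < f e) (hx : v + ∑ e ∈ t, f e • e ∈ F) {e : V} (he : e ∈ t) : v + e ∈ F := by
  set w := ∑ e ∈ t, f e
  have hw : 0 < w := Finset.sum_pos hf ⟨e, he⟩
  set s := w / (1 + w)
  have hs : 0 < s := by positivity
  have hs1 : s < 1 := (div_lt_one (by positivity)).mpr (lt_one_add w)
  have hcomb : ∑ e ∈ t, (f e / w) • (v + s • e) ∈ F := by
    have hsum1 : ∑ e ∈ t, f e / w = 1 := by rw [← Finset.sum_div, div_self hw.ne']
    have := hFconv.add_smul_mem hv hx (t := (1 + w)⁻¹)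
      ⟨by positivity, inv_le_one_of_one_le₀ (by linarith)⟩
    convert this using 1
    simp only [smul_add, Finset.sum_add_distrib, Finset.smul_sum, smul_smul]
    rw [← Finset.sum_smul, hsum1, one_smul]
    congr 2 with e
    congr 1
    simp only [s]
    field_simp
  have hse : v + s • e ∈ F := mem_of_isExtreme_of_sum_smul_mem hP hF
    (fun a ha => div_pos (hf a ha) hw) (by rw [← Finset.sum_div, div_self hw.ne'])
    (fun a ha => hP.add_smul_mem (hF.subset hv) (ht a ha) ⟨hs.le, hs1.le⟩) hcomb he
  refine hF.right_mem_of_mem_openSegment (hF.subset hv) (ht e he) hse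
    ⟨1 - s, s, sub_pos.mpr hs1, hs, sub_add_cancel 1 s, ?_⟩
  module

theorem vectorSpan_eq_span_of_isExtreme (hP : Convex ℝ P) (hF : IsExtreme ℝ P F)
    (hFconv : Convex ℝ F) (hv : v ∈ F) (hT : ∀ e ∈ T, v + e ∈ P)
    (hcone : ∀ x ∈ P, x - v ∈ PointedCone.hull ℝ T) :
    vectorSpan ℝ F = Submodule.span ℝ {e ∈ T | v + e ∈ F} := by
  classical
  refine le_antisymm ?_ ?_
  · rw [vectorSpan_eq_span_vsub_set_right ℝ hv, Submodule.span_le]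
    rintro _ ⟨x, hx, rfl⟩
    obtain ⟨t, htT, -, hxt⟩ := exists_linearIndepOn_mem_hull (hcone x (hF.subset hx))
    obtain ⟨f, hf, hfx⟩ := mem_hull_finset_iff.mp hxt
    have hpos : ∑ e ∈ t with 0 < f e, f e • e = x - v := by
      rw [← hfx]
      refine Finset.sum_filter_of_ne fun e he hne => (hf e he).lt_of_ne' ?_
      exact fun h => hne (by rw [h, zero_smul])
    change x - v ∈ _
    rw [← hpos]
    refine Submodule.sum_mem _ fun e he => Submodule.smul_mem _ _ (Submodule.subset_span ⟨?_, ?_⟩)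
    · exact htT (Finset.mem_of_mem_filter e he)
    · exact add_mem_of_isExtreme_of_sum_smul_mem hP hF hFconv hv
        (fun a ha => hT a (htT (Finset.mem_of_mem_filter a ha)))
        (fun a ha => (Finset.mem_filter.mp ha).2) (by rwa [hpos, add_sub_cancel]) he
  · rw [Submodule.span_le]
    rintro e ⟨-, he⟩
    simpa using vsub_mem_vectorSpan ℝ he hv

end FaceDirections

section EdgeStarDeterminant

/-- The determinant of the matrix with first row `x` and remaining rows `rows`, as a linear
function of `x`. -/
def consDet {A : Type*} [CommRing A] {k : ℕ} (rows : Fin k → Fin (k + 1) → A) :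
    (Fin (k + 1) → A) →ₗ[A] A :=
  (Matrix.detRowAlternating (R := A) (n := Fin (k + 1))).toMultilinearMap.toLinearMap
    (Fin.cons 0 rows) 0

theorem consDet_apply {A : Type*} [CommRing A] {k : ℕ} (rows : Fin k → Fin (k + 1) → A)
    (x : Fin (k + 1) → A) : consDet rows x = (Matrix.of (Fin.cons x rows)).det := by
  rw [consDet, MultilinearMap.toLinearMap_apply, Fin.update_cons_zero]
  rfl

theorem consDet_intCast {k : ℕ} (rows : Fin k → Fin (k + 1) → ℤ) (y : Fin (k + 1) → ℤ) :
    consDet (fun i => intCast (rows i)) (intCast y) = consDet rows y := by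
  rw [consDet_apply, consDet_apply, Int.cast_det]
  congr 1
  ext i j
  refine Fin.cases rfl (fun i => rfl) i

theorem ker_consDet {K : Type*} [Field K] {k : ℕ} {rows : Fin k → Fin (k + 1) → K}
    (h : LinearIndependent K rows) :
    LinearMap.ker (consDet rows) = Submodule.span K (Set.range rows) := by
  ext x
  have hdet : (Matrix.of (Fin.cons x rows)).det ≠ 0 ↔ LinearIndependent K (Fin.cons x rows) := by
    rw [← isUnit_iff_ne_zero, ← Matrix.isUnit_iff_isUnit_det,
      ← Matrix.linearIndependent_rows_iff_isUnit]
    rfl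
  rw [LinearMap.mem_ker, consDet_apply, ← not_ne_iff, hdet, linearIndependent_finCons,
    not_and_not_right, forall_prop_of_true h]

theorem consDet_ne_zero {K : Type*} [Field K] {k : ℕ} {rows : Fin k → Fin (k + 1) → K}
    (h : LinearIndependent K rows) : consDet rows ≠ 0 := by
  intro h0
  have hker := finrank_span_eq_card h
  rw [← ker_consDet h, h0, LinearMap.ker_zero, finrank_top, Module.finrank_fin_fun,
    Fintype.card_fin] at hker
  exact Nat.succ_ne_self k hker

variable {m n : ℕ} (r : Fin m → Fin n → ℤ)

theorem starDet_nonneg : 0 ≤ starDet r := Finset.sum_nonneg fun _ _ => abs_nonneg _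

theorem abs_det_le_starDet (g : Fin n → Fin m) : |(Matrix.of (r ∘ g)).det| ≤ starDet r := by
  classical
  by_cases hg : Function.Injective g
  · have hmono : StrictMono (g ∘ Tuple.sort g) :=
      (Tuple.monotone_sort g).strictMono_of_injective (hg.comp (Tuple.sort g).injective)
    calc |(Matrix.of (r ∘ g)).det| = |((Matrix.of (r ∘ g)).submatrix (Tuple.sort g) id).det| :=
          (Matrix.abs_det_submatrix_equiv_equiv (Tuple.sort g) (Equiv.refl _) _).symm
      _ ≤ starDet r := Finset.single_le_sum
          (f := fun g : Fin n → Fin m => |(Matrix.of fun i j => r (g i) j).det|)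
          (fun _ _ => abs_nonneg _) (Finset.mem_filter.mpr ⟨Finset.mem_univ _, hmono⟩)
  · obtain ⟨a, b, hab, hne⟩ := Function.not_injective_iff.mp hg
    rw [Matrix.det_zero_of_row_eq hne (congrArg r hab), abs_zero]
    exact starDet_nonneg r

theorem abs_consDet_le_starDet {k : ℕ} (r : Fin m → Fin (k + 1) → ℤ) (f : Fin k → Fin m)
    (j : Fin m) : |consDet (r ∘ f) (r j)| ≤ starDet r := by
  have hcons : r ∘ Fin.cons j f = Fin.cons (r j) (r ∘ f) := Fin.comp_cons r j f
  rw [consDet_apply, ← hcons]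
  exact abs_det_le_starDet r _

theorem le_of_starDet_ne_zero {r : Fin m → Fin n → ℤ} (h : starDet r ≠ 0) : n ≤ m := by
  obtain ⟨g, hg, -⟩ := Finset.exists_ne_zero_of_sum_ne_zero h
  simpa using Fintype.card_le_of_injective g (Finset.mem_filter.mp hg).2.injective

end EdgeStarDeterminant

section LevelSets

variable {G : Type*} [AddCommGroup G] (d : G →+ ℤ) (w : G)

theorem comap_zmultiples_le_closure_levelSet :
    (AddSubgroup.zmultiples (d w)).comap d ≤ AddSubgroup.closure {y | d y = d w} := by
  intro y hy
  obtain ⟨k, hk⟩ := AddSubgroup.mem_zmultiples_iff.mp (AddSubgroup.mem_comap.mp hy)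
  have hw : w ∈ AddSubgroup.closure {y | d y = d w} := AddSubgroup.subset_closure rfl
  have hlevel : y - k • w + w ∈ AddSubgroup.closure {y | d y = d w} :=
    AddSubgroup.subset_closure (by simp [← hk])
  have : y = (y - k • w + w) - w + k • w := by abel
  rw [this]
  exact add_mem (sub_mem hlevel hw) (zsmul_mem hw k)

theorem index_closure_levelSet_dvd :
    (AddSubgroup.closure {y | d y = d w}).index ∣ (d w).natAbs := by
  refine (AddSubgroup.index_dvd_of_le (comap_zmultiples_le_closure_levelSet d w)).trans ?_
  rw [AddSubgroup.index_comap, ← Int.index_zmultiples]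
  exact AddSubgroup.relIndex_dvd_index_of_normal _ _

end LevelSets

section LatticePoints

variable {V : Type*} [AddCommGroup V] [Module ℝ V] {Λ : AddSubgroup V} {P T : Set V} {v : V}

theorem sum_smul_mem_convexHull_union_zero {ι : Type*} [Fintype ι] {c : ι → ℝ} {x : ι → V}
    (hc : ∀ i, 0 ≤ c i) (hpos : 0 < ∑ i, c i) (hle : ∑ i, c i ≤ 1) (hx : ∀ i, x i ∈ P) :
    ∑ i, c i • x i ∈ convexHull ℝ (P ∪ {0}) := by
  have hmem : Finset.univ.centerMass c x ∈ convexHull ℝ (P ∪ {0}) :=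
    Finset.centerMass_mem_convexHull _ (fun i _ => hc i) hpos fun i _ => Or.inl (hx i)
  have hzero : 0 ∈ convexHull ℝ (P ∪ {0}) := subset_convexHull ℝ _ (Or.inr rfl)
  rw [← smul_inv_smul₀ hpos.ne' (∑ i, c i • x i)]
  exact (convex_convexHull ℝ _).smul_mem_of_zero_mem hzero hmem ⟨hpos.le, hle⟩

variable [FiniteDimensional ℝ V]

theorem exists_subconvex_sum_smul_add_eq (hv : v ≠ 0) (hvT : v ∈ PointedCone.hull ℝ T) :
    ∃ t : Finset V, ↑t ⊆ T ∧ t.card ≤ Module.finrank ℝ V ∧ ∃ b : t → ℝ, (∀ e, 0 ≤ b e) ∧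
      0 < ∑ e, b e ∧ ∑ e, b e < 1 ∧ ∑ e, b e • (v + e) = v := by
  obtain ⟨t, htT, hind, hvt⟩ := exists_linearIndepOn_mem_hull hvT
  obtain ⟨f, hf, hfv⟩ := mem_hull_finset_iff.mp hvt
  have hcard : t.card ≤ Module.finrank ℝ V := by
    simpa using LinearIndependent.fintype_card_le_finrank hind
  rw [← Finset.sum_coe_sort] at hfv
  set w := ∑ e : t, f e
  have hf0 : ∀ e : t, 0 ≤ f e := fun e => hf e e.2
  have hwpos : 0 < w := by
    refine (Finset.sum_nonneg fun e _ => hf0 e).lt_of_ne fun h => hv ?_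
    have hzero := (Finset.sum_eq_zero_iff_of_nonneg fun e _ => hf0 e).mp h.symm
    rw [← hfv]
    exact Finset.sum_eq_zero fun e he => by rw [hzero e he, zero_smul]
  have hsum : ∑ e : t, f e / (1 + w) = w / (1 + w) := by rw [← Finset.sum_div]
  refine ⟨t, htT, hcard, fun e => f e / (1 + w), fun e => ?_, ?_, ?_, ?_⟩
  · exact div_nonneg (hf0 e) (by positivity)
  · rw [hsum]
    positivity
  · rw [hsum, div_lt_one (by positivity)]
    exact lt_one_add w
  · calc ∑ e : t, (f e / (1 + w)) • (v + (e : V))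
        = (w / (1 + w)) • v + (1 + w)⁻¹ • ∑ e : t, f e • (e : V) := by
          rw [Finset.smul_sum, ← hsum, Finset.sum_smul, ← Finset.sum_add_distrib]
          simp only [smul_add, div_eq_inv_mul, mul_smul]
      _ = v := by
          rw [hfv, ← add_smul, div_eq_mul_inv, ← add_one_mul, add_comm w,
            mul_inv_cancel₀ (by positivity), one_smul]

theorem exists_subconvex_sum_smul_add_mem (hv0 : v ≠ 0) (hv : v ∈ Λ)
    (hvT : v ∈ PointedCone.hull ℝ T) (hTΛ : T ⊆ Λ) :
    ∃ t : Finset V, ↑t ⊆ T ∧ ∃ c : t → ℝ, (∀ e, 0 ≤ c e) ∧ 0 < ∑ e, c e ∧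
      1 ≤ (1 - ∑ e, c e) * subconvexBound (Module.finrank ℝ V) ∧ ∑ e, c e • (v + e) ∈ Λ := by
  obtain ⟨t, htT, hcard, b, hb, hbpos, hb1, hbv⟩ := exists_subconvex_sum_smul_add_eq hv0 hvT
  obtain ⟨c, ⟨Q, z, hQ⟩, hc, hcpos, hc1⟩ := exists_isMultipleModInt_one_le_defect_mul hb hbpos hb1
  rw [Fintype.card_coe] at hc1
  have hdefect : 0 < 1 - ∑ e, c e :=
    pos_of_mul_pos_left (one_pos.trans_le hc1) (Nat.cast_nonneg _)
  refine ⟨t, htT, c, hc, hcpos, hc1.trans ?_, ?_⟩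
  · gcongr
    exact subconvexBound_mono hcard
  · have : ∑ e, c e • (v + (e : V)) = Q • v - ∑ e, z e • (v + (e : V)) := by
      simp only [hQ, sub_smul, mul_smul, Finset.sum_sub_distrib, ← Finset.smul_sum, hbv,
        Int.cast_smul_eq_zsmul]
    rw [this]
    exact sub_mem (zsmul_mem hv Q)
      (sum_mem fun e _ => zsmul_mem (add_mem hv (hTΛ (htT e.2))) (z e))

theorem map_lt_subconvexBound_mul (hv : v ∈ Λ) (hvT : v ∈ PointedCone.hull ℝ T) (hTΛ : T ⊆ Λ)
    (hTP : ∀ e ∈ T, v + e ∈ P) {L : V →ₗ[ℝ] ℝ} (hLv : 0 < L v) (hLP : ∀ x ∈ P, L v ≤ L x) {D : ℝ}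
    (hD : ∀ e ∈ T, L e ≤ D) (hΛP : ↑Λ ∩ (convexHull ℝ (P ∪ {0}) \ P) ⊆ {0}) :
    L v < subconvexBound (Module.finrank ℝ V) * D := by
  have hv0 : v ≠ 0 := fun h => hLv.ne' (by rw [h, map_zero])
  obtain ⟨t, htT, c, hc, hcpos, hc1, huΛ⟩ := exists_subconvex_sum_smul_add_mem hv0 hv hvT hTΛ
  set u := ∑ e, c e • (v + (e : V)) with hu
  have hdefect : 0 < 1 - ∑ e, c e :=
    pos_of_mul_pos_left (one_pos.trans_le hc1) (Nat.cast_nonneg _)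
  have huP : u ∈ P := by
    by_contra huP
    have huhull : u ∈ convexHull ℝ (P ∪ {0}) :=
      sum_smul_mem_convexHull_union_zero hc hcpos (by linarith) fun e => hTP e (htT e.2)
    have hu0 : u = 0 := hΛP ⟨huΛ, huhull, huP⟩
    have hLu : (∑ e, c e) * L v ≤ L u := by
      rw [hu, map_sum, Finset.sum_mul]
      refine Finset.sum_le_sum fun e _ => ?_
      rw [map_smul, smul_eq_mul]
      exact mul_le_mul_of_nonneg_left (hLP _ (hTP e (htT e.2))) (hc e)
    rw [hu0, map_zero] at hLu
    exact hLu.not_gt (mul_pos hcpos hLv)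
  have hLu : L u ≤ (∑ e, c e) * (L v + D) := by
    rw [hu, map_sum, Finset.sum_mul]
    refine Finset.sum_le_sum fun e _ => ?_
    rw [map_smul, smul_eq_mul, map_add]
    exact mul_le_mul_of_nonneg_left (by linarith [hD e (htT e.2)]) (hc e)
  have hdefect_mul : (1 - ∑ e, c e) * L v ≤ (∑ e, c e) * D := by linarith [hLP u huP]
  have hD0 : 0 < D := pos_of_mul_pos_right ((mul_pos hdefect hLv).trans_le hdefect_mul) hcpos.le
  refine lt_of_mul_lt_mul_left ?_ hdefect.le
  calc (1 - ∑ e, c e) * L v ≤ (∑ e, c e) * D := hdefect_mul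
    _ < D := mul_lt_of_lt_one_left hD0 (sub_pos.mp hdefect)
    _ ≤ (1 - ∑ e, c e) * subconvexBound (Module.finrank ℝ V) * D :=
      le_mul_of_one_le_left hD0.le hc1
    _ = (1 - ∑ e, c e) * (subconvexBound (Module.finrank ℝ V) * D) := mul_assoc _ _ _

theorem ne_zero_and_abs_map_lt_subconvexBound_mul [TopologicalSpace V] [ContinuousAdd V]
    [ContinuousSMul ℝ V] (hv : v ∈ Λ) (hvint : v ∈ interior (convexHull ℝ (P ∪ {0})))
    (hTΛ : T ⊆ Λ) (hTP : ∀ e ∈ T, v + e ∈ P) (hcone : ∀ x ∈ P, x - v ∈ PointedCone.hull ℝ T)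
    {L : V →ₗ[ℝ] ℝ} (hL : L ≠ 0) (hside : (∀ x ∈ P, L v ≤ L x) ∨ (∀ x ∈ P, L x ≤ L v)) {D : ℝ}
    (hD : ∀ e ∈ T, |L e| ≤ D) (hΛP : ↑Λ ∩ (convexHull ℝ (P ∪ {0}) \ P) ⊆ {0}) :
    L v ≠ 0 ∧ |L v| < subconvexBound (Module.finrank ℝ V) * D := by
  wlog hLP : ∀ x ∈ P, L v ≤ L x generalizing L
  · simpa using this (L := -L) (neg_ne_zero.mpr hL) (by simpa using hside.symm)
      (by simpa using hD) (by simpa using hside.resolve_left hLP)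
  have hLv : 0 < L v := pos_of_mem_interior_convexHull hL hLP hvint
  rw [abs_of_pos hLv]
  exact ⟨hLv.ne', map_lt_subconvexBound_mul hv (mem_cone_of_mem_interior_convexHull hcone hvint)
    hTΛ hTP hLv hLP (fun e he => (le_abs_self _).trans (hD e he)) hΛP⟩

end LatticePoints

section FaceIndex

theorem HasEdgeData.exists_linearIndependent_direction_eq {n m k : ℕ} {S : Set (Vec n)}
    (hSfin : S.Finite) (hSint : S ⊆ intLattice n) {v : Vec n}
    (hv : v ∈ (convexHull ℝ S).extremePoints ℝ) {E : Fin m → Set (Vec n)} {r : Fin m → Fin n → ℤ}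
    (hE : HasEdgeData (convexHull ℝ S) v E r) {F : Set (Vec n)}
    (hF : IsFaceDim (convexHull ℝ S) F k) (hvF : v ∈ F) :
    ∃ f : Fin k → Fin m, LinearIndependent ℝ (fun i => intCast (r (f i))) ∧
      (affineSpan ℝ F).direction = Submodule.span ℝ (Set.range fun i => intCast (r (f i))) := by
  obtain ⟨hFext, hFconv, rfl⟩ := hF
  have hvint : v ∈ intLattice n := hSint (extremePoints_convexHull_subset hv)
  have hdir : (affineSpan ℝ F).direction =
      Submodule.span ℝ {e ∈ Set.range fun j => intCast (r j) | v + e ∈ F} := by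
    rw [direction_affineSpan]
    exact vectorSpan_eq_span_of_isExtreme (convex_convexHull ℝ S) hFext hFconv hvF
      (Set.forall_mem_range.mpr (hE.add_intCast_mem hSint hvint))
      fun x hx => hE.sub_mem_hull hSfin hv hx
  have hbasis := Submodule.exists_fun_fin_finrank_span_eq ℝ
    {e ∈ Set.range fun j => intCast (r j) | v + e ∈ F}
  rw [← hdir] at hbasis
  obtain ⟨g, hg, hspan, hind⟩ := hbasis
  choose f hf using fun i => (hg i).1
  obtain rfl : (fun i => intCast (r (f i))) = g := funext hf
  exact ⟨f, hind, hspan.symm⟩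

theorem setOf_intCast_mem_affineSpan_eq_levelSet {k : ℕ} {rows : Fin k → Fin (k + 1) → ℤ}
    (hrows : LinearIndependent ℝ (fun i => (intCast (rows i) : Vec (k + 1))))
    {F : Set (Vec (k + 1))}
    (hF : (affineSpan ℝ F).direction = Submodule.span ℝ (Set.range fun i => intCast (rows i)))
    {w : Fin (k + 1) → ℤ} (hw : intCast w ∈ F) :
    {y : Fin (k + 1) → ℤ | intCast y ∈ (affineSpan ℝ F : Set (Vec (k + 1)))} =
      {y | consDet rows y = consDet rows w} := by
  ext y
  change intCast y ∈ affineSpan ℝ F ↔ consDet rows y = consDet rows w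
  rw [← AffineSubspace.vsub_right_mem_direction_iff_mem (mem_affineSpan ℝ hw), hF,
    ← ker_consDet hrows, LinearMap.mem_ker, vsub_eq_sub, map_sub, consDet_intCast, consDet_intCast,
    sub_eq_zero, Int.cast_inj]

theorem statement6_general {k m : ℕ} {S : Set (Vec (k + 1))} (hSfin : S.Finite)
    (hSint : S ⊆ intLattice (k + 1)) {v : Vec (k + 1)} (hv : v ∈ (convexHull ℝ S).extremePoints ℝ)
    (hvint : v ∈ interior (convexHull ℝ (convexHull ℝ S ∪ {0}))) {E : Fin m → Set (Vec (k + 1))}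
    {r : Fin m → Fin (k + 1) → ℤ} (hE : HasEdgeData (convexHull ℝ S) v E r)
    {F : Set (Vec (k + 1))} (hF : IsFaceDim (convexHull ℝ S) F k) (hvF : v ∈ F)
    (hint : ↑(intLattice (k + 1)) ∩ (convexHull ℝ (convexHull ℝ S ∪ {0}) \ convexHull ℝ S) ⊆ {0}) :
    (AddSubgroup.closure {y : Fin (k + 1) → ℤ |
        intCast y ∈ (affineSpan ℝ F : Set (Vec (k + 1)))}).index ≠ 0 ∧
    ((AddSubgroup.closure {y : Fin (k + 1) → ℤ |
        intCast y ∈ (affineSpan ℝ F : Set (Vec (k + 1)))}).index : ℤ)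
      < subconvexBound (k + 1) * starDet r := by
  obtain ⟨f, hind, hdir⟩ := hE.exists_linearIndependent_direction_eq hSfin hSint hv hF hvF
  have hvΛ : v ∈ intLattice (k + 1) := hSint (extremePoints_convexHull_subset hv)
  obtain ⟨w, rfl⟩ : ∃ w, intCast w = v := by
    choose w hw using hvΛ
    exact ⟨w, funext fun i => (hw i).symm⟩
  obtain ⟨hne, hlt⟩ := ne_zero_and_abs_map_lt_subconvexBound_mul (D := starDet r) hvΛ hvint
    (Set.range_subset_iff.mpr fun j => intCast_mem_intLattice (r j))
    (Set.forall_mem_range.mpr (hE.add_intCast_mem hSint hvΛ))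
    (fun x hx => hE.sub_mem_hull hSfin hv hx) (consDet_ne_zero hind)
    (forall_le_or_forall_le_of_isExtreme (convex_convexHull ℝ S) hF.1 hF.2.1 hvF
      (hdir.trans (ker_consDet hind).symm))
    (Set.forall_mem_range.mpr fun j => by
      rw [consDet_intCast]
      exact_mod_cast abs_consDet_le_starDet r f j) hint
  rw [consDet_intCast, Module.finrank_fin_fun] at hlt
  rw [consDet_intCast, Int.cast_ne_zero] at hne
  have hdvd := index_closure_levelSet_dvd (consDet (r ∘ f)).toAddMonoidHom w
  rw [setOf_intCast_mem_affineSpan_eq_levelSet hind hdir hvF]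
  refine ⟨ne_zero_of_dvd_ne_zero (Int.natAbs_ne_zero.mpr hne) hdvd, ?_⟩
  calc _ ≤ |consDet (r ∘ f) w| := by
        rw [Int.abs_eq_natAbs]
        exact_mod_cast Nat.le_of_dvd (Int.natAbs_pos.mpr hne) hdvd
    _ < subconvexBound (k + 1) * starDet r := mod_cast hlt

end FaceIndex

section Numerics

theorem mul_two_pow_le_four_mul_factorial {n : ℕ} (hn : 2 ≤ n) :
    n * 2 ^ n ≤ 4 * n.factorial := by
  induction n, hn using Nat.le_induction with
  | base => decide
  | succ n hn ih =>
    calc (n + 1) * 2 ^ (n + 1) = (n + 1) * (2 * 2 ^ n) := by rw [pow_succ']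
      _ ≤ (n + 1) * (n * 2 ^ n) := by gcongr
      _ ≤ (n + 1) * (4 * n.factorial) := by gcongr
      _ = 4 * (n + 1).factorial := by rw [Nat.factorial_succ, mul_left_comm]

theorem two_mul_three_pow_le_four_pow {n : ℕ} (hn : 3 ≤ n) : 2 * 3 ^ n ≤ 4 ^ n := by
  induction n, hn using Nat.le_induction with
  | base => decide
  | succ n hn ih =>
    rw [pow_succ, pow_succ]
    lia

theorem subconvexBound_le_four_pow {n : ℕ} (hn : 2 ≤ n) :
    subconvexBound n ≤ 4 ^ (4 * n.factorial) := by
  obtain rfl | hn3 := hn.eq_or_lt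
  · decide
  calc subconvexBound n = 2 * 3 ^ n * (4 * 3 ^ (n - 1)) ^ (2 ^ n - 1) := rfl
    _ ≤ 4 ^ n * (4 * 4 ^ (n - 1)) ^ (2 ^ n - 1) := by
      gcongr
      · exact two_mul_three_pow_le_four_pow hn3
      · norm_num
    _ = 4 ^ (n * 2 ^ n) := by
      rw [mul_pow_sub_one (by lia), mul_pow_sub_one (by positivity), pow_mul]
    _ ≤ 4 ^ (4 * n.factorial) :=
      Nat.pow_le_pow_right (by norm_num) (mul_two_pow_le_four_mul_factorial hn)

theorem subconvexBound_mul_starDet_le {n m : ℕ} (hn : 2 ≤ n) (r : Fin m → Fin n → ℤ) :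
    subconvexBound n * starDet r ≤ ((n : ℤ) * m) ^ (4 * n.factorial) * starDet r := by
  obtain h0 | h0 := eq_or_ne (starDet r) 0
  · rw [h0, mul_zero, mul_zero]
  refine mul_le_mul_of_nonneg_right ?_ (starDet_nonneg r)
  have hnm : 2 * 2 ≤ n * m := Nat.mul_le_mul hn (hn.trans (le_of_starDet_ne_zero h0))
  exact_mod_cast (subconvexBound_le_four_pow hn).trans (Nat.pow_le_pow_left hnm _)

end Numerics

/-- Theorem 6: if `P` is an `n`-dimensional integer convex polyhedron not
containing `0`, `v` a vertex of `P` interior to `conv(P ∪ {0})` contained in exactly `m`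
edges, `F` an `(n-1)`-dimensional face of `P` containing `v`, and the only integer point of
`conv(P ∪ {0})` outside `P` is `0`, then the integer distance
`ρ(F, 0)` (the index in `ℤⁿ` of the subgroup generated by `ℤⁿ ∩ aff F`) is finite and
`ρ(F, 0) < (nm)^{4·n!} · det oSt_v`. -/
theorem statement6 (n : ℕ) (hn : 2 ≤ n)
    (S : Set (Vec n)) (hSfin : S.Finite) (hSint : ∀ x ∈ S, IsIntVec x)
    (P : Set (Vec n)) (hP : P = convexHull ℝ S)
    (hdim : affineSpan ℝ P = ⊤)
    (h0 : (0 : Vec n) ∉ P)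
    (v : Vec n) (hv : v ∈ Set.extremePoints ℝ P)
    (hvint : v ∈ interior (convexHull ℝ (P ∪ {0})))
    (m : ℕ) (E : Fin m → Set (Vec n)) (r : Fin m → (Fin n → ℤ))
    (hE : HasEdgeData P v E r)
    (F : Set (Vec n)) (hF : IsFaceDim P F (n - 1)) (hvF : v ∈ F)
    (hint : {x : Vec n | IsIntVec x} ∩ (convexHull ℝ (P ∪ {0}) \ P) = {0}) :
    (AddSubgroup.closure
        {y : Fin n → ℤ | intCast y ∈ (affineSpan ℝ F : Set (Vec n))}).index ≠ 0 ∧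
    ((AddSubgroup.closure
        {y : Fin n → ℤ | intCast y ∈ (affineSpan ℝ F : Set (Vec n))}).index : ℤ)
      < ((n : ℤ) * (m : ℤ)) ^ (4 * n.factorial) * starDet r := by
  subst hP
  obtain ⟨k, rfl⟩ : ∃ k, n = k + 1 := ⟨n - 1, by lia⟩
  have h := statement6_general hSfin hSint hv hvint hE hF hvF hint.subset
  exact ⟨h.1, h.2.trans_le (subconvexBound_mul_starDet_le hn r)⟩
end
end

section
/- Let P = conv(S) ⊂ ℝ^N, where S is a finite set equal to the set of extreme points of P, and let d ≥ 2 be the dimension of the affine hull of P. Assign to each x ∈ S a mass ν_x > 0, and for a nonempty subset M' ⊆ S let c(M') = (Σ_{x∈M'} ν_x·x) / (Σ_{x∈M'} ν_x) be its center of mass. Let 𝔗 be a finite family of d-element affinely independent subsets of S such that the simplices conv(Δ), Δ ∈ 𝔗, have pairwise disjoint relative interiors and their union equals the relative boundary of P. Then the relative interior of P equals ⋃_{Δ∈𝔗} relint( conv(Δ ∪ {c(S \ Δ)}) ). -/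
/-!
Let `P = conv S`. A convex combination of points `z i` with strictly positive weights lies in the
relative interior of `conv {z i}`. Replacing the points of `S \ Δ` by their center of mass does not
move the center of mass `c` of `S`, so `c` lies in the relative interior both of `P` and of every
`conv (Δ ∪ {c(S \ Δ)})`. A ray from `c` through a relative interior point `p ≠ c` of `P` leaves `P`
at a relative boundary point `q` beyond `p`, and `q` lies in some `conv Δ`; hence `p` lies strictly
between the relative interior point `c` and the point `q` of `conv (Δ ∪ {c(S \ Δ)})`.
-/

open Set

noncomputable section

/-- The center of mass of a finite set of points of `ℝ^N` with masses `ν`. -/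
def massCenter {N : ℕ} (ν : (Fin N → ℝ) → ℝ) (M : Finset (Fin N → ℝ)) : Fin N → ℝ :=
  (∑ x ∈ M, ν x)⁻¹ • ∑ x ∈ M, ν x • x

open AffineMap Filter Topology

section AffineSpace

variable {𝕜 V P : Type*} [Ring 𝕜] [AddCommGroup V] [Module 𝕜 V] [TopologicalSpace P]
  [AddTorsor V P] {s : Set P} {x : P}

theorem mem_intrinsicInterior_iff_mem_nhdsWithin :
    x ∈ intrinsicInterior 𝕜 s ↔ x ∈ affineSpan 𝕜 s ∧ s ∈ 𝓝[affineSpan 𝕜 s] x := by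
  constructor
  · rintro ⟨y, hy, rfl⟩
    exact ⟨y.2, preimage_coe_mem_nhds_subtype.1 (mem_interior_iff_mem_nhds.1 hy)⟩
  · rintro ⟨hx, hs⟩
    exact ⟨⟨x, hx⟩, mem_interior_iff_mem_nhds.2 (preimage_coe_mem_nhds_subtype.2 hs), rfl⟩

theorem disjoint_intrinsicInterior_intrinsicFrontier (s : Set P) :
    Disjoint (intrinsicInterior 𝕜 s) (intrinsicFrontier 𝕜 s) := by
  rw [← intrinsicClosure_sdiff_intrinsicInterior]
  exact disjoint_sdiff_right

theorem mem_intrinsicFrontier_of_notMem_intrinsicInterior (hx : x ∈ s)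
    (hx' : x ∉ intrinsicInterior 𝕜 s) : x ∈ intrinsicFrontier 𝕜 s := by
  rw [← intrinsicClosure_sdiff_intrinsicInterior]
  exact ⟨subset_intrinsicClosure hx, hx'⟩

end AffineSpace

section Algebra

theorem centerMass_ite_centerMass_sdiff {𝕜 E ι : Type*} [Field 𝕜] [AddCommGroup E] [Module 𝕜 E]
    [DecidableEq ι] {t u : Finset ι} (hut : u ⊆ t) {w : ι → 𝕜} (hw : ∑ i ∈ t \ u, w i ≠ 0)
    (z : ι → E) :
    t.centerMass w (fun i => if i ∈ u then z i else (t \ u).centerMass w z) =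
      t.centerMass w z := by
  have hsdiff : ∑ i ∈ t \ u, w i • (if i ∈ u then z i else (t \ u).centerMass w z) =
      ∑ i ∈ t \ u, w i • z i := by
    rw [Finset.sum_congr rfl fun i hi => by rw [if_neg (Finset.mem_sdiff.1 hi).2],
      ← Finset.sum_smul, Finset.centerMass, smul_inv_smul₀ hw]
  have hu : ∑ i ∈ u, w i • (if i ∈ u then z i else (t \ u).centerMass w z) =
      ∑ i ∈ u, w i • z i :=
    Finset.sum_congr rfl fun i hi => by rw [if_pos hi]
  refine congrArg ((∑ i ∈ t, w i)⁻¹ • ·) ?_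
  rw [← Finset.sum_sdiff hut, hsdiff, hu, Finset.sum_sdiff hut]

theorem add_sum_smul_sub_mem_of_convex {𝕜 E ι : Type*} [Field 𝕜] [LinearOrder 𝕜]
    [IsStrictOrderedRing 𝕜] [AddCommGroup E] [Module 𝕜 E] [Fintype ι] {s : Set E} (hs : Convex 𝕜 s)
    {c : E} (hc : c ∈ s) {z : ι → E} (hz : ∀ i, z i ∈ s) {v : ι → 𝕜} (hv : ∀ i, 0 ≤ v i)
    (hv₁ : ∑ i, v i ≤ 1) : c + ∑ i, v i • (z i - c) ∈ s := by
  have hmem : ∑ o : Option ι, o.elim (1 - ∑ i, v i) v • o.elim c z ∈ s := by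
    refine hs.sum_mem (fun o _ => ?_) (by simp [Fintype.sum_option]) (fun o _ => ?_)
    · cases o with
      | none => exact sub_nonneg.2 hv₁
      | some i => exact hv i
    · cases o with
      | none => exact hc
      | some i => exact hz i
  convert hmem using 1
  simp only [Fintype.sum_option, Option.elim, smul_sub, Finset.sum_sub_distrib,
    ← Finset.sum_smul, sub_smul, one_smul]
  abel

theorem finrank_vectorSpan_lt_card {k V P : Type*} [DivisionRing k] [AddCommGroup V] [Module k V]
    [AddTorsor V P] {S : Finset P} (hS : S.Nonempty) :
    Module.finrank k (vectorSpan k (S : Set P)) < S.card := by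
  classical
  obtain ⟨n, hn⟩ := Nat.exists_eq_add_one_of_ne_zero hS.card_ne_zero
  have himage : S.image id = S := Finset.image_id
  have hle := finrank_vectorSpan_image_finset_le k id S hn
  rw [himage] at hle
  omega

end Algebra

section TopologicalVectorSpace

variable {E : Type*} [AddCommGroup E] [Module ℝ E] [TopologicalSpace E]
  [IsTopologicalAddGroup E] [ContinuousSMul ℝ E] {s T : Set E} {c p q : E} {t : ℝ}

theorem exists_one_lt_lineMap_mem (hp : p ∈ intrinsicInterior ℝ s) (hc : c ∈ affineSpan ℝ s) :
    ∃ t : ℝ, 1 < t ∧ lineMap c p t ∈ s := by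
  obtain ⟨hp, hs⟩ := mem_intrinsicInterior_iff_mem_nhdsWithin.1 hp
  have htendsto : Tendsto (lineMap c p : ℝ → E) (𝓝 1) (𝓝[affineSpan ℝ s] p) :=
    tendsto_nhdsWithin_iff.2 ⟨lineMap_continuous.tendsto' 1 p (lineMap_apply_one c p),
      .of_forall fun t => lineMap_mem t hc hp⟩
  have hnear : ∀ᶠ t in 𝓝[>] (1 : ℝ), lineMap c p t ∈ s := nhdsWithin_le_nhds (htendsto hs)
  exact (eventually_mem_nhdsWithin.and hnear).exists

theorem lineMap_mem_intrinsicInterior (hs : Convex ℝ s) (hc : c ∈ intrinsicInterior ℝ s)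
    (hq : q ∈ s) (ht₀ : 0 < t) (ht₁ : t ≤ 1) : lineMap q c t ∈ intrinsicInterior ℝ s := by
  obtain ⟨hc, hcs⟩ := mem_intrinsicInterior_iff_mem_nhdsWithin.1 hc
  have hqA : q ∈ affineSpan ℝ s := subset_affineSpan ℝ s hq
  have hinv : homothety q t⁻¹ (lineMap q c t) = c := by
    simp [homothety_eq_lineMap, ht₀.ne']
  have htendsto : Tendsto (homothety q t⁻¹) (𝓝[affineSpan ℝ s] lineMap q c t)
      (𝓝[affineSpan ℝ s] c) := by
    have h := (homothety_continuous q t⁻¹).continuousWithinAt.tendsto_nhdsWithin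
      (x := lineMap q c t) fun y (hy : y ∈ affineSpan ℝ s) => lineMap_mem t⁻¹ hqA hy
    rwa [hinv] at h
  refine mem_intrinsicInterior_iff_mem_nhdsWithin.2 ⟨lineMap_mem t hqA hc, ?_⟩
  filter_upwards [htendsto hcs] with y hy
  have hy_eq : lineMap q (homothety q t⁻¹ y) t = y := by
    simp [homothety_eq_lineMap, ht₀.ne']
  exact hy_eq ▸ hs.lineMap_mem hq hy ⟨ht₀.le, ht₁⟩

theorem mem_intrinsicInterior_of_lineMap_mem (hs : Convex ℝ s) (hc : c ∈ intrinsicInterior ℝ s)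
    (ht : 1 < t) (hq : lineMap c p t ∈ s) : p ∈ intrinsicInterior ℝ s := by
  have hp_eq : lineMap (lineMap c p t) c (1 - t⁻¹) = p := by
    rw [lineMap_apply_one_sub, lineMap_lineMap_right, inv_mul_cancel₀ (by positivity),
      lineMap_apply_one]
  exact hp_eq ▸ lineMap_mem_intrinsicInterior hs hc hq (sub_pos.2 (inv_lt_one_of_one_lt₀ ht))
    (sub_le_self 1 (by positivity))

theorem intrinsicInterior_subset_intrinsicInterior (hs : Convex ℝ s) (hTs : T ⊆ s)
    (hT : (T ∩ intrinsicInterior ℝ s).Nonempty) :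
    intrinsicInterior ℝ T ⊆ intrinsicInterior ℝ s := by
  intro p hp
  obtain ⟨c, hcT, hcs⟩ := hT
  obtain ⟨t, ht, hq⟩ := exists_one_lt_lineMap_mem hp (subset_affineSpan ℝ T hcT)
  exact mem_intrinsicInterior_of_lineMap_mem hs hcs ht (hTs hq)

variable [T2Space E]

theorem exists_one_le_lineMap_mem_intrinsicFrontier (hs : IsCompact s) (hc : c ∈ s) (hp : p ∈ s)
    (hpc : p ≠ c) : ∃ t : ℝ, 1 ≤ t ∧ lineMap c p t ∈ intrinsicFrontier ℝ s := by
  have hemb : IsClosedEmbedding (lineMap c p : ℝ → E) :=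
    (Homeomorph.addRight c).isClosedEmbedding.comp
      (isClosedEmbedding_smul_left (𝕜 := ℝ) (sub_ne_zero.2 hpc))
  have hone : (1 : ℝ) ∈ lineMap c p ⁻¹' s := by simpa using hp
  obtain ⟨t, hts, hmax⟩ :=
    (hemb.isCompact_preimage hs).exists_isMaxOn ⟨1, hone⟩ continuousOn_id
  have ht : 1 ≤ t := hmax hone
  refine ⟨t, ht, mem_intrinsicFrontier_of_notMem_intrinsicInterior hts fun hint => ?_⟩
  obtain ⟨u, hu, hus⟩ := exists_one_lt_lineMap_mem hint (subset_affineSpan ℝ s hc)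
  rw [lineMap_lineMap_right] at hus
  exact (lt_mul_of_one_lt_left (by positivity) hu).not_ge (hmax hus)

theorem intrinsicFrontier_nonempty (hs : IsCompact s) (hs' : s.Nontrivial) :
    (intrinsicFrontier ℝ s).Nonempty := by
  obtain ⟨c, hc, p, hp, hne⟩ := hs'
  obtain ⟨t, -, ht⟩ := exists_one_le_lineMap_mem_intrinsicFrontier hs hc hp hne.symm
  exact ⟨_, ht⟩

theorem intrinsicInterior_eq_iUnion {ι : Type*} [Nonempty ι] {T : ι → Set E} (hs : IsCompact s)
    (hsc : Convex ℝ s) (hTc : ∀ i, Convex ℝ (T i)) (hTs : ∀ i, T i ⊆ s)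
    (hcs : c ∈ intrinsicInterior ℝ s) (hcT : ∀ i, c ∈ intrinsicInterior ℝ (T i))
    (hcover : intrinsicFrontier ℝ s ⊆ ⋃ i, T i) :
    intrinsicInterior ℝ s = ⋃ i, intrinsicInterior ℝ (T i) := by
  refine Subset.antisymm (fun p hp => mem_iUnion.2 ?_) (iUnion_subset fun i =>
    intrinsicInterior_subset_intrinsicInterior hsc (hTs i)
      ⟨c, intrinsicInterior_subset (hcT i), hcs⟩)
  obtain rfl | hpc := eq_or_ne p c
  · exact ⟨Classical.arbitrary ι, hcT _⟩
  obtain ⟨t, ht, hq⟩ := exists_one_le_lineMap_mem_intrinsicFrontier hs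
    (intrinsicInterior_subset hcs) (intrinsicInterior_subset hp) hpc
  have ht_ne : 1 ≠ t := by
    rintro rfl
    rw [lineMap_apply_one] at hq
    exact (disjoint_intrinsicInterior_intrinsicFrontier s).notMem_of_mem_left hp hq
  obtain ⟨i, hqT⟩ := mem_iUnion.1 (hcover hq)
  exact ⟨i, mem_intrinsicInterior_of_lineMap_mem (hTc i) (hcT i) (ht.lt_of_ne ht_ne) hqT⟩

theorem image_mem_nhdsWithin_range {F : Type*} [AddCommGroup F] [Module ℝ F] [TopologicalSpace F]
    [IsTopologicalAddGroup F] [ContinuousSMul ℝ F] (f : F →ₗ[ℝ] E) [FiniteDimensional ℝ f.range]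
    {x : F} {U : Set F} (hU : U ∈ 𝓝 x) : f '' U ∈ 𝓝[f.range] f x := by
  have hopen := f.rangeRestrict.isOpenMap_of_finiteDimensional f.surjective_rangeRestrict
  have himage := image_mem_map (m := Subtype.val) (hopen.image_mem_nhds hU)
  rwa [image_image, map_nhds_subtype_val] at himage

theorem sum_smul_mem_intrinsicInterior_convexHull {ι : Type*} [Fintype ι] {w : ι → ℝ} {z : ι → E}
    (hw : ∀ i, 0 < w i) (hw₁ : ∑ i, w i = 1) :
    ∑ i, w i • z i ∈ intrinsicInterior ℝ (convexHull ℝ (range z)) := by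
  classical
  set c := ∑ i, w i • z i with hc
  set K := convexHull ℝ (range z)
  have hzK (i : ι) : z i ∈ K := subset_convexHull ℝ _ (mem_range_self i)
  have hcK : c ∈ K := (convex_convexHull ℝ _).sum_mem (fun i _ => (hw i).le) hw₁ fun i _ => hzK i
  let f : (ι → ℝ) →ₗ[ℝ] E := Fintype.linearCombination ℝ fun i => z i - c
  have hspan : affineSpan ℝ K ≤ AffineSubspace.mk' c f.range := by
    rw [affineSpan_convexHull, affineSpan_le]
    rintro _ ⟨i, rfl⟩
    exact ⟨Pi.single i 1, by simp [f, Fintype.linearCombination_apply_single]⟩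
  let U : Set (ι → ℝ) := {v | (∀ i, 0 < v i) ∧ ∑ i, v i < 1}
  have hU : IsOpen U := by
    simp only [U, ofPred_and, ofPred_forall]
    exact (isOpen_iInter_of_finite fun i => isOpen_lt (by fun_prop) (by fun_prop)).inter
      (isOpen_lt (by fun_prop) (by fun_prop))
  -- `w` lies in `ker f`; halving it makes its total less than `1`.
  have hwU : (2⁻¹ : ℝ) • w ∈ U := by
    refine ⟨fun i => mul_pos (by norm_num) (hw i), ?_⟩
    simp only [Pi.smul_apply, ← Finset.smul_sum, hw₁]
    norm_num
  have hfw : f ((2⁻¹ : ℝ) • w) = 0 := by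
    simp [f, Fintype.linearCombination_apply, smul_sub, ← Finset.sum_smul, hw₁, ← hc]
  have hnhds : f '' U ∈ 𝓝[f.range] 0 := hfw ▸ image_mem_nhdsWithin_range f (hU.mem_nhds hwU)
  have htendsto : Tendsto (· - c) (𝓝[affineSpan ℝ K] c) (𝓝[f.range] 0) := by
    rw [← sub_self c]
    exact (continuous_sub_right c).continuousWithinAt.tendsto_nhdsWithin fun y hy => hspan hy
  refine mem_intrinsicInterior_iff_mem_nhdsWithin.2 ⟨subset_affineSpan ℝ _ hcK, ?_⟩
  filter_upwards [htendsto hnhds] with y ⟨v, ⟨hv, hv₁⟩, hvy⟩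
  have hy : c + f v = y := by rw [hvy, add_sub_cancel]
  exact hy ▸ add_sum_smul_sub_mem_of_convex (convex_convexHull ℝ _) hcK hzK
    (fun i => (hv i).le) hv₁.le

theorem centerMass_mem_intrinsicInterior_convexHull {ι : Type*} {t : Finset ι} (ht : t.Nonempty)
    {w : ι → ℝ} (hw : ∀ i ∈ t, 0 < w i) (z : ι → E) :
    t.centerMass w z ∈ intrinsicInterior ℝ (convexHull ℝ (z '' t)) := by
  have hW : 0 < ∑ i ∈ t, w i := Finset.sum_pos hw ht
  have hmem := sum_smul_mem_intrinsicInterior_convexHull (z := fun i : t => z i)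
    (w := fun i : t => (∑ i ∈ t, w i)⁻¹ * w i) (fun i => mul_pos (inv_pos.2 hW) (hw i i.2))
    (by rw [← Finset.mul_sum, Finset.sum_coe_sort t w, inv_mul_cancel₀ hW.ne'])
  simp only [mul_smul, ← Finset.smul_sum, Finset.sum_coe_sort t fun i => w i • z i] at hmem
  rwa [image_eq_range]

theorem centerMass_mem_intrinsicInterior_convexHull_union {ι : Type*} [DecidableEq ι]
    {t u : Finset ι} (hut : u ⊂ t) {w : ι → ℝ} (hw : ∀ i ∈ t, 0 < w i) (z : ι → E) :
    t.centerMass w z ∈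
      intrinsicInterior ℝ (convexHull ℝ (z '' u ∪ {(t \ u).centerMass w z})) := by
  have hsdiff : (t \ u).Nonempty := Finset.sdiff_nonempty.2 hut.2
  have hW : 0 < ∑ i ∈ t \ u, w i :=
    Finset.sum_pos (fun i hi => hw i (Finset.sdiff_subset hi)) hsdiff
  set c := (t \ u).centerMass w z with hc
  have himage : (fun i => if i ∈ u then z i else c) '' t = z '' u ∪ {c} := by
    rw [← Finset.union_sdiff_of_subset hut.1, Finset.coe_union, image_union]
    congr 1
    · exact image_congr fun i hi => if_pos hi
    · rw [image_congr fun i hi => if_neg (Finset.mem_sdiff.1 hi).2]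
      exact Nonempty.image_const (by exact_mod_cast hsdiff) c
  rw [← centerMass_ite_centerMass_sdiff hut.1 hW.ne' z, ← hc, ← himage]
  exact centerMass_mem_intrinsicInterior_convexHull (hsdiff.mono Finset.sdiff_subset) hw _

theorem statement11_general [DecidableEq E] {S : Finset E} (hS : S.Nontrivial) {ν : E → ℝ}
    (hν : ∀ x ∈ S, 0 < ν x) {𝔗 : Set (Finset E)} (h𝔗 : ∀ Δ ∈ 𝔗, Δ ⊂ S)
    (hcover : intrinsicFrontier ℝ (convexHull ℝ (S : Set E)) ⊆
      ⋃ Δ ∈ 𝔗, convexHull ℝ (Δ : Set E)) :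
    intrinsicInterior ℝ (convexHull ℝ (S : Set E)) =
      ⋃ Δ ∈ 𝔗, intrinsicInterior ℝ
        (convexHull ℝ ((Δ : Set E) ∪ {(S \ Δ).centerMass ν id})) := by
  have hcompact : IsCompact (convexHull ℝ (S : Set E)) := S.finite_toSet.isCompact_convexHull ℝ
  have hcenter (Δ : 𝔗) :
      (S \ (Δ : Finset E)).centerMass ν id ∈ convexHull ℝ (S : Set E) := by
    have hνΔ : ∀ x ∈ S \ (Δ : Finset E), 0 < ν x := fun x hx => hν x (Finset.sdiff_subset hx)
    exact Finset.centerMass_mem_convexHull _ (fun x hx => (hνΔ x hx).le)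
      (Finset.sum_pos hνΔ (Finset.sdiff_nonempty.2 (h𝔗 Δ Δ.2).2)) fun x hx => Finset.sdiff_subset hx
  have : Nonempty 𝔗 := by
    obtain ⟨q, hq⟩ := intrinsicFrontier_nonempty hcompact (hS.mono (subset_convexHull ℝ _))
    obtain ⟨Δ, hΔ, -⟩ := mem_iUnion₂.1 (hcover hq)
    exact ⟨⟨Δ, hΔ⟩⟩
  rw [biUnion_eq_iUnion] at hcover ⊢
  refine intrinsicInterior_eq_iUnion (c := S.centerMass ν id) hcompact (convex_convexHull ℝ _)
    (fun Δ => convex_convexHull ℝ _) (fun Δ => ?_) ?_ (fun Δ => ?_) (hcover.trans ?_)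
  · exact convexHull_min (union_subset
      ((Finset.coe_subset.2 (h𝔗 Δ Δ.2).1).trans (subset_convexHull ℝ _))
      (singleton_subset_iff.2 (hcenter Δ))) (convex_convexHull ℝ _)
  · simpa using centerMass_mem_intrinsicInterior_convexHull hS.nonempty hν id
  · simpa using centerMass_mem_intrinsicInterior_convexHull_union (h𝔗 Δ Δ.2) hν id
  · exact iUnion_mono fun Δ => convexHull_mono subset_union_left

end TopologicalVectorSpace

/-- Lemma 3: let `P = conv S` with `S` the (finite) set of extreme
points of `P`, `d ≥ 2` the dimension of `P`, positive masses `ν` on `S`, and `𝔗` a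
partition of the relative boundary of `P` into `(d-1)`-dimensional simplices with vertices
in `S`.  Then the relative interior of `P` is the union over `Δ ∈ 𝔗` of the relative
interiors of `conv(Δ ∪ {c(S \ Δ)})`. -/
theorem statement11 (N : ℕ) (S : Finset (Fin N → ℝ))
    (P : Set (Fin N → ℝ)) (hP : P = convexHull ℝ (S : Set (Fin N → ℝ)))
    (hext : (S : Set (Fin N → ℝ)) = Set.extremePoints ℝ P)
    (d : ℕ) (hd2 : 2 ≤ d)
    (hdim : Module.finrank ℝ (affineSpan ℝ P).direction = d)
    (ν : (Fin N → ℝ) → ℝ) (hν : ∀ x ∈ S, 0 < ν x)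
    (𝔗 : Finset (Finset (Fin N → ℝ)))
    (h𝔗 : ∀ Δ ∈ 𝔗, Δ ⊆ S ∧ Δ.card = d ∧
      AffineIndependent ℝ (fun x : (Δ : Set (Fin N → ℝ)) => (x : Fin N → ℝ)))
    (hdisj : ∀ Δ₁ ∈ 𝔗, ∀ Δ₂ ∈ 𝔗, Δ₁ ≠ Δ₂ →
      intrinsicInterior ℝ (convexHull ℝ (Δ₁ : Set (Fin N → ℝ))) ∩
        intrinsicInterior ℝ (convexHull ℝ (Δ₂ : Set (Fin N → ℝ))) = ∅)
    (hcover : (⋃ Δ ∈ 𝔗, convexHull ℝ (Δ : Set (Fin N → ℝ))) = intrinsicFrontier ℝ P) :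
    intrinsicInterior ℝ P =
      ⋃ Δ ∈ 𝔗, intrinsicInterior ℝ
        (convexHull ℝ ((Δ : Set (Fin N → ℝ)) ∪ {massCenter ν (S \ Δ)})) := by
  subst hP
  rw [affineSpan_convexHull, direction_affineSpan] at hdim
  have hS : S.Nonempty := Finset.nonempty_iff_ne_empty.2 <| by
    rintro rfl
    rw [Finset.coe_empty, vectorSpan_empty, finrank_bot] at hdim
    omega
  have hcard : d < S.card := hdim ▸ finrank_vectorSpan_lt_card hS
  have hssubset (Δ) (hΔ : Δ ∈ 𝔗) : Δ ⊂ S :=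
    (h𝔗 Δ hΔ).1.ssubset_of_ne fun hΔS => hcard.ne (hΔS ▸ (h𝔗 Δ hΔ).2.1.symm)
  exact statement11_general (Finset.one_lt_card_iff_nontrivial.1 (by omega)) hν hssubset hcover.ge
end
end
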